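/- arXiv:2307.07672 — 2 statements merged into one kernel-verified Lean document; each statement's English description precedes it below -/
import Mathlib

section
/- Let Ω be a nonempty finite set, p a full-support probability vector on Ω, n ≥ 1, and for each ω ∈ Ω let v^ω : Δ(Ω)^n → ℝ be continuous. Then the infimum in the dual representation of the value is attained: there exist real numbers V^ω (ω ∈ Ω) and continuous functions φ_i^ω : Δ(Ω) → ℝ (i ∈ {1,…,n}, ω ∈ Ω) with v^ω(x_1,…,x_n) ≤ V^ω + ∑_{i=1}^n φ_i^ω(x_i) for all (x_1,…,x_n) ∈ Δ(Ω)^n and all ω, with ∑_{ω∈Ω} x(ω)·φ_i^ω(x) = 0 for all x ∈ Δ(Ω) and all i, and with ∑_{ω∈Ω} p(ω)·V^ω equal to the value Val of the persuasion problem. -/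
open MeasureTheory

noncomputable section

abbrev Belief (Ω : Type) [Fintype Ω] : Type := stdSimplex ℝ Ω

variable {Ω : Type} [Fintype Ω] [MeasurableSpace Ω] [MeasurableSingletonClass Ω]

/-- The joint distribution of state and beliefs. -/
def jointP (p : Ω → ℝ) {X : Type} [MeasurableSpace X] (μ : Ω → Measure X) :
    Measure (Ω × X) :=
  ∑ ω : Ω, ENNReal.ofReal (p ω) • ((Measure.dirac ω).prod (μ ω))

/-- Feasibility of a collection of conditional belief distributions, n receivers. -/
def Feasible (p : Ω → ℝ) (n : ℕ) (μ : Ω → Measure (Fin n → Belief Ω)) : Prop :=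
  (∀ ω, IsProbabilityMeasure (μ ω)) ∧
  ∀ (i : Fin n) (ω' : Ω),
    (fun z : Ω × (Fin n → Belief Ω) => (z.2 i).1 ω')
      =ᵐ[jointP p μ]
      (jointP p μ)[Set.indicator {z : Ω × (Fin n → Belief Ω) | z.1 = ω'} (fun _ => (1 : ℝ)) |
        MeasurableSpace.comap (fun z : Ω × (Fin n → Belief Ω) => z.2 i) inferInstance]

/-- Feasibility of a collection of conditional belief distributions, single receiver. -/
def Feasible1 (p : Ω → ℝ) (lam : Ω → Measure (Belief Ω)) : Prop :=
  (∀ ω, IsProbabilityMeasure (lam ω)) ∧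
  ∀ ω' : Ω,
    (fun z : Ω × Belief Ω => (z.2).1 ω')
      =ᵐ[jointP p lam]
      (jointP p lam)[Set.indicator {z : Ω × Belief Ω | z.1 = ω'} (fun _ => (1 : ℝ)) |
        MeasurableSpace.comap (fun z : Ω × Belief Ω => z.2) inferInstance]

/-- the value of the persuasion problem -/
def Val (p : Ω → ℝ) (n : ℕ) (v : Ω → (Fin n → Belief Ω) → ℝ) : ℝ :=
  sSup { r | ∃ μ : Ω → Measure (Fin n → Belief Ω),
    Feasible p n μ ∧ r = ∑ ω : Ω, p ω * ∫ x, v ω x ∂(μ ω) }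

end

/-- Relaxed dual feasibility (no continuity is required here). -/
def DualFeas {Ω : Type} [Fintype Ω] {n : ℕ} (v : Ω → (Fin n → Belief Ω) → ℝ)
    (V : Ω → ℝ) (φ : Fin n → Ω → Belief Ω → ℝ) : Prop :=
  (∀ (ω : Ω) (x : Fin n → Belief Ω), v ω x ≤ V ω + ∑ i : Fin n, φ i ω (x i)) ∧
  (∀ (i : Fin n) (x : Belief Ω), ∑ ω : Ω, x.1 ω * φ i ω x ≤ 0)

/-- `φ` inherits the modulus of continuity of `v` in coordinate `i`. -/
def ModAt {Ω : Type} [Fintype Ω] {n : ℕ} (v : Ω → (Fin n → Belief Ω) → ℝ)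
    (φ : Fin n → Ω → Belief Ω → ℝ) (i : Fin n) : Prop :=
  ∀ (ω : Ω) (s t : Belief Ω) (c : ℝ),
    (∀ x : Fin n → Belief Ω, v ω (Function.update x i s) ≤ v ω (Function.update x i t) + c) →
    φ i ω s ≤ φ i ω t + c

lemma exists_belief (Ω : Type) [Fintype Ω] [Nonempty Ω] : Nonempty (Belief Ω) := by
  classical
  obtain ⟨ω⟩ := ‹Nonempty Ω›
  exact ⟨⟨Pi.single ω 1, single_mem_stdSimplex ℝ ω⟩⟩

lemma ctrans_step {Ω : Type} [Fintype Ω] [Nonempty Ω] {n : ℕ}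
    {v : Ω → (Fin n → Belief Ω) → ℝ} {V : Ω → ℝ} {φ : Fin n → Ω → Belief Ω → ℝ}
    (h : DualFeas v V φ) (a : Fin n) :
    ∃ φ' : Fin n → Ω → Belief Ω → ℝ, DualFeas v V φ' ∧ ModAt v φ' a ∧ ∀ i, i ≠ a → φ' i = φ i := by
  classical
  have := exists_belief Ω
  let F : Ω → Belief Ω → (Fin n → Belief Ω) → ℝ := fun ω t x =>
    v ω (Function.update x a t) - V ω - ∑ j ∈ Finset.univ.erase a, φ j ω (x j)
  let ψ : Ω → Belief Ω → ℝ := fun ω t => ⨆ x, F ω t x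
  have hle : ∀ ω t x, F ω t x ≤ φ a ω t := by
    intro ω t x
    have h1 := h.1 ω (Function.update x a t)
    rw [← Finset.add_sum_erase _ _ (Finset.mem_univ a)] at h1
    have h2 : ∑ j ∈ Finset.univ.erase a, φ j ω (Function.update x a t j)
        = ∑ j ∈ Finset.univ.erase a, φ j ω (x j) := by
      apply Finset.sum_congr rfl
      intro j hj
      rw [Function.update_of_ne (Finset.ne_of_mem_erase hj)]
    rw [h2, Function.update_self] at h1
    simp only [F]
    linarith
  have hbdd : ∀ ω t, BddAbove (Set.range (F ω t)) := by
    intro ω t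
    exact ⟨φ a ω t, by rintro _ ⟨x, rfl⟩; exact hle ω t x⟩
  have hψle : ∀ ω t, ψ ω t ≤ φ a ω t := fun ω t => ciSup_le (hle ω t)
  refine ⟨Function.update φ a ψ, ⟨?_, ?_⟩, ?_, ?_⟩
  · intro ω x
    rw [← Finset.add_sum_erase _ _ (Finset.mem_univ a)]
    have h2 : ∑ j ∈ Finset.univ.erase a, Function.update φ a ψ j ω (x j)
        = ∑ j ∈ Finset.univ.erase a, φ j ω (x j) := by
      apply Finset.sum_congr rfl
      intro j hj
      rw [Function.update_of_ne (Finset.ne_of_mem_erase hj)]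
    rw [h2, Function.update_self]
    have h3 : F ω (x a) x ≤ ψ ω (x a) := le_ciSup (hbdd ω (x a)) x
    simp only [F, Function.update_eq_self] at h3
    linarith
  · intro i x
    by_cases hi : i = a
    · subst hi
      rw [Function.update_self]
      refine le_trans (Finset.sum_le_sum fun ω _ => ?_) (h.2 i x)
      exact mul_le_mul_of_nonneg_left (hψle ω x) (x.2.1 ω)
    · rw [Function.update_of_ne hi]
      exact h.2 i x
  · intro ω s t c hc
    rw [Function.update_self]
    refine ciSup_le fun x => ?_
    have h3 : F ω t x ≤ ψ ω t := le_ciSup (hbdd ω t) x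
    have := hc x
    simp only [F] at h3 ⊢
    linarith
  · intro i hi
    rw [Function.update_of_ne hi]

lemma ctrans {Ω : Type} [Fintype Ω] [Nonempty Ω] {n : ℕ}
    {v : Ω → (Fin n → Belief Ω) → ℝ} {V : Ω → ℝ} {φ : Fin n → Ω → Belief Ω → ℝ}
    (h : DualFeas v V φ) :
    ∃ φ' : Fin n → Ω → Belief Ω → ℝ, DualFeas v V φ' ∧ ∀ i, ModAt v φ' i := by
  classical
  suffices H : ∀ s : Finset (Fin n), ∃ φ' : Fin n → Ω → Belief Ω → ℝ,
      DualFeas v V φ' ∧ ∀ i ∈ s, ModAt v φ' i by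
    obtain ⟨φ', h1, h2⟩ := H Finset.univ
    exact ⟨φ', h1, fun i => h2 i (Finset.mem_univ i)⟩
  intro s
  induction s using Finset.induction_on with
  | empty => exact ⟨φ, h, by simp⟩
  | insert a s ha ih =>
    obtain ⟨φ1, h1, h2⟩ := ih
    obtain ⟨φ2, h3, h4, h5⟩ := ctrans_step h1 a
    refine ⟨φ2, h3, fun i hi => ?_⟩
    by_cases hia : i = a
    · subst hia; exact h4
    · have := h2 i (Finset.mem_of_mem_insert_of_ne hi hia)
      intro ω s t c hc
      rw [h5 i hia]
      exact this ω s t c hc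

lemma mod_continuous {Ω : Type} [Fintype Ω] {n : ℕ}
    {v : Ω → (Fin n → Belief Ω) → ℝ} (hv : ∀ ω, Continuous (v ω))
    {φ : Fin n → Ω → Belief Ω → ℝ} {i : Fin n} (h : ModAt v φ i) (ω : Ω) :
    Continuous (φ i ω) := by
  have hu : UniformContinuous (v ω) := CompactSpace.uniformContinuous_of_continuous (hv ω)
  rw [Metric.continuous_iff]
  intro t ε hε
  rw [Metric.uniformContinuous_iff] at hu
  obtain ⟨δ, hδ, H⟩ := hu (ε / 2) (by linarith)
  have key : ∀ s t : Belief Ω, dist s t < δ → φ i ω s ≤ φ i ω t + ε / 2 := by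
    intro s t hst
    apply h
    intro x
    have hd : dist (Function.update x i s) (Function.update x i t) < δ := by
      rw [dist_pi_lt_iff hδ]
      intro j
      by_cases hj : j = i
      · subst hj; simpa using hst
      · simpa [Function.update_of_ne hj] using hδ
    have := H hd
    rw [Real.dist_eq] at this
    linarith [(abs_lt.1 this).2]
  refine ⟨δ, hδ, fun s hs => ?_⟩
  have h1 := key s t hs
  have h2 := key t s (by rwa [dist_comm])
  rw [Real.dist_eq, abs_lt]
  constructor <;> linarith

lemma dual_min {Ω : Type} [Fintype Ω] [Nonempty Ω]
    (p : Ω → ℝ) (hp : ∀ ω, 0 < p ω) (hpsum : ∑ ω : Ω, p ω = 1)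
    {n : ℕ} (v : Ω → (Fin n → Belief Ω) → ℝ) (hv : ∀ ω, Continuous (v ω)) :
    ∃ V φ, DualFeas v V φ ∧ (∀ i, ModAt v φ i) ∧
      ∀ V' φ', DualFeas v V' φ' → ∑ ω, p ω * V ω ≤ ∑ ω, p ω * V' ω := by
  classical
  have := exists_belief Ω
  obtain ⟨M, hM0, hM⟩ : ∃ M : ℝ, 0 ≤ M ∧ ∀ ω x, |v ω x| ≤ M := by
    have : ∀ ω, ∃ M : ℝ, ∀ x, |v ω x| ≤ M := by
      intro ω
      obtain ⟨C, hC⟩ := (isCompact_range (continuous_abs.comp (hv ω))).bddAbove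
      exact ⟨C, fun x => hC ⟨x, rfl⟩⟩
    choose C hC using this
    refine ⟨∑ ω, |C ω|, Finset.sum_nonneg fun _ _ => abs_nonneg _, fun ω x => ?_⟩
    refine (hC ω x).trans ((le_abs_self _).trans ?_)
    exact Finset.single_le_sum (f := fun ω => |C ω|) (fun _ _ => abs_nonneg _) (Finset.mem_univ ω)
  let K : Set ((Ω → ℝ) × (Fin n → Ω → Belief Ω → ℝ)) :=
    {z | DualFeas v z.1 z.2 ∧ (∀ i, ModAt v z.2 i) ∧ ∑ ω, p ω * z.1 ω ≤ M}
  let W : Ω → ℝ := fun ω => (M + M) / p ω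
  let Bx : Set ((Ω → ℝ) × (Fin n → Ω → Belief Ω → ℝ)) :=
    (Set.univ.pi fun ω => Set.Icc (-M) (W ω)) ×ˢ
    (Set.univ.pi fun _ => Set.univ.pi fun ω => Set.univ.pi fun _ =>
      Set.Icc (-M - W ω - n * (2 * M)) (2 * M))
  have hBx : IsCompact Bx := by
    refine (isCompact_univ_pi fun ω => isCompact_Icc).prod
      (isCompact_univ_pi fun _ => isCompact_univ_pi fun ω => isCompact_univ_pi fun _ =>
        isCompact_Icc)
  have hsub : K ⊆ Bx := by
    rintro ⟨V, φ⟩ ⟨⟨h1, h2⟩, h3, h4⟩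
    simp only at h1 h2 h3 h4
    let e : Ω → Belief Ω := fun ω => ⟨Pi.single ω 1, single_mem_stdSimplex ℝ ω⟩
    have hdiag : ∀ i ω, φ i ω (e ω) ≤ 0 := by
      intro i ω
      have := h2 i (e ω)
      simpa [e, Pi.single_apply] using this
    have hup : ∀ i ω s, φ i ω s ≤ 2 * M := by
      intro i ω s
      have := h3 i ω s (e ω) (2 * M) (by
        intro x
        have a1 := (abs_le.1 (hM ω (Function.update x i s))).2
        have a2 := (abs_le.1 (hM ω (Function.update x i (e ω)))).1
        linarith)
      linarith [hdiag i ω]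
    have hVlow : ∀ ω, -M ≤ V ω := by
      intro ω
      have a1 := h1 ω (fun _ => e ω)
      have a2 := (abs_le.1 (hM ω (fun _ => e ω))).1
      have a3 : ∑ i : Fin n, φ i ω (e ω) ≤ 0 := Finset.sum_nonpos fun i _ => hdiag i ω
      linarith
    have hVup : ∀ ω, V ω ≤ W ω := by
      intro ω
      rw [le_div_iff₀ (hp ω)]
      rw [← Finset.add_sum_erase _ _ (Finset.mem_univ ω)] at h4 hpsum
      have a1 : ∑ ω' ∈ Finset.univ.erase ω, p ω' * (-M) ≤ ∑ ω' ∈ Finset.univ.erase ω, p ω' * V ω' :=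
        Finset.sum_le_sum fun ω' _ => mul_le_mul_of_nonneg_left (hVlow ω') (hp ω').le
      rw [← Finset.sum_mul] at a1
      have a2 : 0 ≤ p ω * M := mul_nonneg (hp ω).le hM0
      have a3 : ∑ ω' ∈ Finset.univ.erase ω, p ω' = 1 - p ω := by linarith
      rw [a3] at a1
      nlinarith
    refine ⟨fun ω _ => ⟨hVlow ω, hVup ω⟩, fun i _ ω _ s _ => ⟨?_, hup i ω s⟩⟩
    have a1 := h1 ω (fun _ => s)
    rw [← Finset.add_sum_erase _ _ (Finset.mem_univ i)] at a1
    have a2 : ∑ j ∈ Finset.univ.erase i, φ j ω s ≤ ∑ j ∈ Finset.univ.erase i, 2 * M :=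
      Finset.sum_le_sum fun j _ => hup j ω s
    have a3 : ∑ j ∈ Finset.univ.erase i, 2 * M ≤ ∑ j : Fin n, 2 * M :=
      Finset.sum_le_sum_of_subset_of_nonneg (Finset.erase_subset _ _)
        (fun _ _ _ => by linarith)
    have a4 : ∑ j : Fin n, 2 * M = n * (2 * M) := by simp
    have a5 := (abs_le.1 (hM ω (fun _ => s))).1
    have a6 := hVup ω
    show -M - W ω - n * (2 * M) ≤ φ i ω s
    linarith
  have hclosed : IsClosed K := by
    have : K = ((⋂ ω, ⋂ x, {z | v ω x ≤ z.1 ω + ∑ i : Fin n, z.2 i ω (x i)}) ∩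
        (⋂ i, ⋂ x : Belief Ω, {z | ∑ ω : Ω, x.1 ω * z.2 i ω x ≤ 0})) ∩
        ((⋂ i, ⋂ ω, ⋂ s, ⋂ t, ⋂ c, ⋂ (_ : ∀ x : Fin n → Belief Ω,
            v ω (Function.update x i s) ≤ v ω (Function.update x i t) + c),
          {z | z.2 i ω s ≤ z.2 i ω t + c}) ∩ {z | ∑ ω, p ω * z.1 ω ≤ M}) := by
      ext z
      simp only [K, DualFeas, ModAt, Set.mem_inter_iff, Set.mem_iInter, Set.mem_ofPred_eq]
    rw [this]
    refine IsClosed.inter (IsClosed.inter ?_ ?_) (IsClosed.inter ?_ ?_)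
    · exact isClosed_iInter fun ω => isClosed_iInter fun x =>
        isClosed_le (by fun_prop) (by fun_prop)
    · exact isClosed_iInter fun ω => isClosed_iInter fun x =>
        isClosed_le (by fun_prop) (by fun_prop)
    · exact isClosed_iInter fun ω => isClosed_iInter fun x => isClosed_iInter fun x =>
        isClosed_iInter fun x => isClosed_iInter fun x => isClosed_iInter fun x =>
        isClosed_le (by fun_prop) (by fun_prop)
    · exact isClosed_le (by fun_prop) (by fun_prop)
  have hcpt : IsCompact K := hBx.of_isClosed_subset hclosed hsub
  have hne : K.Nonempty := by
    have h0 : DualFeas v (fun _ => M) (fun _ _ _ => 0) := by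
      refine ⟨fun ω x => ?_, fun i x => ?_⟩
      · simpa using (abs_le.1 (hM ω x)).2
      · simp
    obtain ⟨φ', h1, h2⟩ := ctrans h0
    refine ⟨(fun _ => M, φ'), h1, h2, ?_⟩
    simp only
    rw [← Finset.sum_mul, hpsum, one_mul]
  obtain ⟨⟨V, φ⟩, hz, hmin⟩ := hcpt.exists_isMinOn hne
    (f := fun z => ∑ ω, p ω * z.1 ω) (by fun_prop)
  refine ⟨V, φ, hz.1, hz.2.1, fun V' φ' h' => ?_⟩
  obtain ⟨φ'', h1, h2⟩ := ctrans h'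
  by_cases hB : ∑ ω, p ω * V' ω ≤ M
  · exact hmin (show (V', φ'') ∈ K from ⟨h1, h2, hB⟩)
  · have := hz.2.2
    simp only at this
    linarith

lemma cont_coord {Ω : Type} [Fintype Ω] (ω' : Ω) : Continuous fun x : Belief Ω => x.1 ω' :=
  (continuous_apply ω').comp continuous_subtype_val

lemma cont_coord' {Ω : Type} [Fintype Ω] {n : ℕ} (i : Fin n) (ω' : Ω) :
    Continuous fun x : Fin n → Belief Ω => (x i).1 ω' :=
  (cont_coord ω').comp (continuous_apply i)

lemma setIntegral_eq_of_cont {Y Z : Type} [MeasurableSpace Y] [TopologicalSpace Z]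
    [HasOuterApproxClosed Z] [MeasurableSpace Z] [BorelSpace Z] (P : Measure Y) [IsFiniteMeasure P]
    (T : Y → Z) (hT : Measurable T) (a b : Y → ℝ) (ha : Measurable a) (hb : Measurable b)
    (ha0 : ∀ y, 0 ≤ a y) (hb0 : ∀ y, 0 ≤ b y) (hai : Integrable a P) (hbi : Integrable b P)
    (h : ∀ g : Z → ℝ, Continuous g → ∫ y, a y * g (T y) ∂P = ∫ y, b y * g (T y) ∂P)
    (A : Set Z) (hA : MeasurableSet A) :
    ∫ y in T ⁻¹' A, a y ∂P = ∫ y in T ⁻¹' A, b y ∂P := by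
  have fin : ∀ a : Y → ℝ, Integrable a P →
      IsFiniteMeasure ((P.withDensity fun y => ENNReal.ofReal (a y)).map T) := by
    intro a hai
    have := isFiniteMeasure_withDensity_ofReal hai.2
    infer_instance
  have := fin a hai
  have := fin b hbi
  have int : ∀ a : Y → ℝ, Measurable a → (∀ y, 0 ≤ a y) → ∀ g : Z → ℝ, Continuous g →
      ∫ z, g z ∂((P.withDensity fun y => ENNReal.ofReal (a y)).map T) =
        ∫ y, a y * g (T y) ∂P := by
    intro a ha ha0 g hg
    rw [integral_map hT.aemeasurable hg.measurable.aestronglyMeasurable,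
      integral_withDensity_eq_integral_toReal_smul (by fun_prop) (by simp)]
    refine integral_congr_ae (Filter.Eventually.of_forall fun y => ?_)
    simp [ENNReal.toReal_ofReal (ha0 y)]
  have heq : (P.withDensity fun y => ENNReal.ofReal (a y)).map T =
      (P.withDensity fun y => ENNReal.ofReal (b y)).map T := by
    apply ext_of_forall_integral_eq_of_IsFiniteMeasure
    intro g
    rw [int a ha ha0 g g.continuous, int b hb hb0 g g.continuous, h g g.continuous]
  have h2 := congrArg (fun ρ : Measure Z => ρ A) heq
  simp only [Measure.map_apply hT hA, withDensity_apply _ (hT hA)] at h2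
  rw [integral_eq_lintegral_of_nonneg_ae (Filter.Eventually.of_forall ha0)
      ha.aestronglyMeasurable,
    integral_eq_lintegral_of_nonneg_ae (Filter.Eventually.of_forall hb0)
      hb.aestronglyMeasurable, h2]

lemma jointP_finite {Ω : Type} [Fintype Ω] [MeasurableSpace Ω] [MeasurableSingletonClass Ω]
    (p : Ω → ℝ) {X : Type} [MeasurableSpace X] (μ : Ω → Measure X)
    (hμ : ∀ ω, IsProbabilityMeasure (μ ω)) : IsFiniteMeasure (jointP p μ) := by
  unfold jointP
  have : ∀ ω, IsFiniteMeasure (ENNReal.ofReal (p ω) • ((Measure.dirac ω).prod (μ ω))) := by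
    intro ω
    exact Measure.smul_finite _ ENNReal.ofReal_ne_top
  infer_instance

lemma integral_jointP {Ω : Type} [Fintype Ω] [MeasurableSpace Ω] [MeasurableSingletonClass Ω]
    (p : Ω → ℝ) (hp : ∀ ω, 0 < p ω) {X : Type} [MeasurableSpace X] (μ : Ω → Measure X)
    (hμ : ∀ ω, IsProbabilityMeasure (μ ω)) (F : Ω × X → ℝ)
    (hF : Integrable F (jointP p μ)) (hFm : Measurable F) :
    ∫ z, F z ∂(jointP p μ) = ∑ ω, p ω * ∫ x, F (ω, x) ∂(μ ω) := by
  unfold jointP at *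
  rw [integral_finsetSum_measure (integrable_finsetSum_measure.1 hF)]
  refine Finset.sum_congr rfl fun ω _ => ?_
  rw [integral_smul_measure, ENNReal.toReal_ofReal (hp ω).le, Measure.dirac_prod,
    integral_map (by fun_prop) hFm.aestronglyMeasurable, smul_eq_mul]

lemma measurable_state {Ω X : Type} [Fintype Ω] [MeasurableSpace Ω] [MeasurableSingletonClass Ω]
    [MeasurableSpace X] (φ : Ω → X → ℝ) (hφ : ∀ ω, Measurable (φ ω)) :
    Measurable (fun z : Ω × X => φ z.1 z.2) :=
  measurable_from_prod_countable_right hφ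

lemma bdd_of_cont {Ω X : Type} [Fintype Ω] [TopologicalSpace X] [CompactSpace X]
    (φ : Ω → X → ℝ) (hφ : ∀ ω, Continuous (φ ω)) : ∃ C, ∀ ω x, ‖φ ω x‖ ≤ C := by
  have : ∀ ω, ∃ M : ℝ, ∀ x, ‖φ ω x‖ ≤ M := by
    intro ω
    obtain ⟨C, hC⟩ := (isCompact_range (continuous_norm.comp (hφ ω))).bddAbove
    exact ⟨C, fun x => hC ⟨x, rfl⟩⟩
  choose C hC using this
  refine ⟨∑ ω, |C ω|, fun ω x => ?_⟩
  refine (hC ω x).trans ((le_abs_self _).trans ?_)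
  exact Finset.single_le_sum (f := fun ω => |C ω|) (fun _ _ => abs_nonneg _) (Finset.mem_univ ω)

lemma integrable_jointP {Ω X : Type} [Fintype Ω] [MeasurableSpace Ω] [MeasurableSingletonClass Ω]
    [MeasurableSpace X] [TopologicalSpace X] [CompactSpace X] [BorelSpace X]
    (p : Ω → ℝ) (μ : Ω → Measure X)
    (hμ : ∀ ω, IsProbabilityMeasure (μ ω))
    (φ : Ω → X → ℝ) (hφ : ∀ ω, Continuous (φ ω)) :
    Integrable (fun z : Ω × X => φ z.1 z.2) (jointP p μ) := by
  have := jointP_finite p μ hμ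
  obtain ⟨C, hC⟩ := bdd_of_cont φ hφ
  exact Integrable.of_bound
    (measurable_state φ fun ω => (hφ ω).measurable).aestronglyMeasurable C
    (Filter.Eventually.of_forall fun z => hC _ _)

lemma indicator_state {Ω X : Type} [DecidableEq Ω] (ω' : Ω) :
    Set.indicator {z : Ω × X | z.1 = ω'} (fun _ => (1 : ℝ)) =
      fun z => if z.1 = ω' then 1 else 0 := by
  ext z
  simp [Set.indicator_apply]

/-- Feasible collections satisfy the martingale test identity. -/
lemma feasible_test {Ω : Type} [Fintype Ω] [MeasurableSpace Ω] [MeasurableSingletonClass Ω]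
    (p : Ω → ℝ) (hp : ∀ ω, 0 < p ω) {n : ℕ} {μ : Ω → Measure (Fin n → Belief Ω)}
    (hμ : Feasible p n μ) (i : Fin n) (φ : Ω → Belief Ω → ℝ) (hφ : ∀ ω, Continuous (φ ω))
    (h0 : ∀ x : Belief Ω, ∑ ω, x.1 ω * φ ω x = 0) :
    ∑ ω, p ω * ∫ x, φ ω (x i) ∂(μ ω) = 0 := by
  classical
  have hfin := jointP_finite p μ hμ.1
  set P := jointP p μ with hP
  have hm : MeasurableSpace.comap (fun z : Ω × (Fin n → Belief Ω) => z.2 i) inferInstance ≤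
      (inferInstance : MeasurableSpace (Ω × (Fin n → Belief Ω))) :=
    Measurable.comap_le (by fun_prop)
  have step : ∀ ω' : Ω,
      ∫ z, (if z.1 = ω' then (1 : ℝ) else 0) * φ ω' (z.2 i) ∂P =
        ∫ z, (z.2 i).1 ω' * φ ω' (z.2 i) ∂P := by
    intro ω'
    have h1 := hμ.2 i ω'
    rw [indicator_state] at h1
    let a : Ω × (Fin n → Belief Ω) → ℝ := fun z => if z.1 = ω' then 1 else 0
    let g : Ω × (Fin n → Belief Ω) → ℝ := fun z => φ ω' (z.2 i)
    have hai : Integrable a P := integrable_jointP p μ hμ.1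
      (fun ω _ => if ω = ω' then 1 else 0) (fun ω => continuous_const)
    have hagi : Integrable (a * g) P := integrable_jointP p μ hμ.1
      (fun ω x => (if ω = ω' then 1 else 0) * φ ω' (x i))
      (fun ω => by have := hφ ω'; fun_prop)
    have hg : StronglyMeasurable[MeasurableSpace.comap
        (fun z : Ω × (Fin n → Belief Ω) => z.2 i) inferInstance] g := by
      apply Measurable.stronglyMeasurable
      exact (hφ ω').measurable.comp (comap_measurable _)
    have h2 := condExp_mul_of_stronglyMeasurable_right hg hagi hai
    have h3 := integral_condExp (μ := P) (f := a * g) hm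
    calc ∫ z, a z * g z ∂P = ∫ z, (a * g) z ∂P := rfl
      _ = _ := h3.symm
      _ = _ := by
        refine integral_congr_ae ?_
        filter_upwards [h2, h1] with z hz1 hz2
        rw [hz1, Pi.mul_apply, ← hz2]
  have hs := Finset.sum_congr rfl (fun ω' (_ : ω' ∈ Finset.univ) => step ω')
  rw [← integral_finsetSum, ← integral_finsetSum] at hs
  · simp only [h0, integral_zero] at hs
    rw [← hs]
    have e : (fun z : Ω × (Fin n → Belief Ω) =>
        ∑ ω', (if z.1 = ω' then (1 : ℝ) else 0) * φ ω' (z.2 i)) = fun z => φ z.1 (z.2 i) := by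
      ext z; simp
    rw [e, integral_jointP p hp μ hμ.1]
    · exact integrable_jointP p μ hμ.1 (fun ω x => φ ω (x i))
        (fun ω => by have := hφ ω; fun_prop)
    · exact measurable_state (fun ω (x : Fin n → Belief Ω) => φ ω (x i))
        (fun ω => by have := (hφ ω).measurable; fun_prop)
  · intro ω' _
    exact integrable_jointP p μ hμ.1 (fun ω x => (x i).1 ω' * φ ω' (x i))
        (fun ω => (cont_coord' i ω').mul ((hφ ω').comp (continuous_apply i)))
  · intro ω' _
    exact integrable_jointP p μ hμ.1 (fun ω x => (if ω = ω' then 1 else 0) * φ ω' (x i))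
        (fun ω => by have := hφ ω'; fun_prop)

lemma feasible_of_test {Ω : Type} [Fintype Ω] [MeasurableSpace Ω] [MeasurableSingletonClass Ω]
    (p : Ω → ℝ) (hp : ∀ ω, 0 < p ω) {n : ℕ} {μ : Ω → Measure (Fin n → Belief Ω)}
    (hμ : ∀ ω, IsProbabilityMeasure (μ ω))
    (h : ∀ (i : Fin n) (φ : Ω → Belief Ω → ℝ), (∀ ω, Continuous (φ ω)) →
      (∀ x : Belief Ω, ∑ ω, x.1 ω * φ ω x = 0) → ∑ ω, p ω * ∫ x, φ ω (x i) ∂(μ ω) = 0) :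
    Feasible p n μ := by
  classical
  refine ⟨hμ, fun i ω' => ?_⟩
  have hfin := jointP_finite p μ hμ
  have hm : MeasurableSpace.comap (fun z : Ω × (Fin n → Belief Ω) => z.2 i) inferInstance ≤
      (inferInstance : MeasurableSpace (Ω × (Fin n → Belief Ω))) :=
    Measurable.comap_le (by fun_prop)
  rw [indicator_state]
  let a : Ω × (Fin n → Belief Ω) → ℝ := fun z => if z.1 = ω' then 1 else 0
  let b : Ω × (Fin n → Belief Ω) → ℝ := fun z => (z.2 i).1 ω'
  have hai : Integrable a (jointP p μ) := integrable_jointP p μ hμ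
    (fun ω _ => if ω = ω' then 1 else 0) (fun ω => continuous_const)
  have hbi : Integrable b (jointP p μ) := integrable_jointP p μ hμ
    (fun ω x => (x i).1 ω') (fun ω => cont_coord' i ω')
  have ham : Measurable a := measurable_state
    (fun ω (_ : Fin n → Belief Ω) => if ω = ω' then 1 else 0) (fun ω => measurable_const)
  have hbm : Measurable b := by
    have hc : Continuous fun x : Belief Ω => x.1 ω' := cont_coord ω'
    exact hc.measurable.comp (by fun_prop)
  refine ae_eq_condExp_of_forall_setIntegral_eq hm hai (fun s _ _ => hbi.integrableOn) ?_ ?_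
  · rintro _ ⟨A, hA, rfl⟩ _
    refine setIntegral_eq_of_cont (jointP p μ) (fun z : Ω × (Fin n → Belief Ω) => z.2 i)
      (by fun_prop) b a hbm ham (fun z => (z.2 i).2.1 ω') (fun z => ?_) hbi hai ?_ A hA
    · simp only [a]; split_ifs <;> norm_num
    · intro g hg
      have h1 := h i (fun ω x => ((if ω = ω' then 1 else 0) - x.1 ω') * g x)
        (fun ω => (continuous_const.sub (cont_coord ω')).mul hg) (by
          intro x
          have hx : ∑ ω, x.1 ω = 1 := x.2.2
          calc ∑ ω, x.1 ω * (((if ω = ω' then 1 else 0) - x.1 ω') * g x)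
              = (∑ ω, x.1 ω * (if ω = ω' then 1 else 0)) * g x
                - (∑ ω, x.1 ω) * (x.1 ω' * g x) := by
                rw [Finset.sum_mul, Finset.sum_mul, ← Finset.sum_sub_distrib]
                exact Finset.sum_congr rfl fun ω _ => by ring
            _ = 0 := by rw [hx]; simp)
      have i1 := integrable_jointP p μ hμ
        (fun ω x => ((if ω = ω' then 1 else 0) - (x i).1 ω') * g (x i))
        (fun ω => (continuous_const.sub (cont_coord' i ω')).mul (hg.comp (continuous_apply i)))
      have i2 := integrable_jointP p μ hμ
        (fun ω x => (if ω = ω' then 1 else 0) * g (x i)) (fun ω => by fun_prop)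
      have i3 := integrable_jointP p μ hμ
        (fun ω x => (x i).1 ω' * g (x i))
        (fun ω => (cont_coord' i ω').mul (hg.comp (continuous_apply i)))
      rw [← integral_jointP p hp μ hμ
        (fun z => ((if z.1 = ω' then 1 else 0) - (z.2 i).1 ω') * g (z.2 i)) i1
        (measurable_state (fun ω (x : Fin n → Belief Ω) =>
          ((if ω = ω' then 1 else 0) - (x i).1 ω') * g (x i))
          (fun ω => Continuous.measurable
            ((continuous_const.sub (cont_coord' i ω')).mul (hg.comp (continuous_apply i)))))] at h1
      simp only [sub_mul] at h1
      rw [integral_sub i2 i3] at h1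
      simp only [a, b]
      linarith
  · apply StronglyMeasurable.aestronglyMeasurable
    apply Measurable.stronglyMeasurable
    have hc : Continuous fun x : Belief Ω => x.1 ω' := cont_coord ω'
    exact hc.measurable.comp (comap_measurable _)

lemma DualFeas.add' {Ω : Type} [Fintype Ω] {n : ℕ} {f g : Ω → (Fin n → Belief Ω) → ℝ}
    {V W : Ω → ℝ} {φ ψ : Fin n → Ω → Belief Ω → ℝ} (h1 : DualFeas f V φ) (h2 : DualFeas g W ψ) :
    DualFeas (fun ω x => f ω x + g ω x) (fun ω => V ω + W ω) (fun i ω x => φ i ω x + ψ i ω x) := by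
  refine ⟨fun ω x => ?_, fun i x => ?_⟩
  · rw [Finset.sum_add_distrib]
    linarith [h1.1 ω x, h2.1 ω x]
  · simp only [mul_add, Finset.sum_add_distrib]
    linarith [h1.2 i x, h2.2 i x]

lemma DualFeas.smul' {Ω : Type} [Fintype Ω] {n : ℕ} {f : Ω → (Fin n → Belief Ω) → ℝ}
    {V : Ω → ℝ} {φ : Fin n → Ω → Belief Ω → ℝ} (h1 : DualFeas f V φ) {c : ℝ} (hc : 0 ≤ c) :
    DualFeas (fun ω x => c * f ω x) (fun ω => c * V ω) (fun i ω x => c * φ i ω x) := by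
  refine ⟨fun ω x => ?_, fun i x => ?_⟩
  · rw [← Finset.mul_sum, ← mul_add]
    exact mul_le_mul_of_nonneg_left (h1.1 ω x) hc
  · have : ∑ ω, x.1 ω * (c * φ i ω x) = c * ∑ ω, x.1 ω * φ i ω x := by
      rw [Finset.mul_sum]
      exact Finset.sum_congr rfl fun ω _ => by ring
    rw [this]
    exact mul_nonpos_of_nonneg_of_nonpos hc (h1.2 i x)

lemma riesz_compact {X : Type} [TopologicalSpace X] [T2Space X] [CompactSpace X]
    [MeasurableSpace X] [BorelSpace X] (L : C(X, ℝ) →ₗ[ℝ] ℝ) (hL : ∀ f, 0 ≤ f → 0 ≤ L f) :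
    ∃ ν : Measure X, IsFiniteMeasure ν ∧ ∀ f : C(X, ℝ), ∫ x, f x ∂ν = L f := by
  let L' : CompactlySupportedContinuousMap X ℝ →ₗ[ℝ] ℝ :=
    { toFun := fun f => L f.toContinuousMap
      map_add' := fun f g => by
        rw [← map_add]; rfl
      map_smul' := fun c f => by
        rw [← map_smul]; rfl }
  let Λ := PositiveLinearMap.mk₀ L' (fun f hf => hL _ hf)
  refine ⟨RealRMK.rieszMeasure Λ, ?_, fun f => ?_⟩
  · exact inferInstanceAs (IsFiniteMeasure (RealRMK.rieszMeasure Λ))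
  · have := RealRMK.integral_rieszMeasure Λ
      (CompactlySupportedContinuousMap.continuousMapEquiv f)
    exact this

lemma strong_duality {Ω : Type} [Fintype Ω] [Nonempty Ω] [MeasurableSpace Ω]
    [MeasurableSingletonClass Ω]
    (p : Ω → ℝ) (hp : ∀ ω, 0 < p ω) (hpsum : ∑ ω : Ω, p ω = 1)
    (n : ℕ) (v : Ω → (Fin n → Belief Ω) → ℝ) (hv : ∀ ω, Continuous (v ω)) (V₀ : Ω → ℝ)
    (φ₀ : Fin n → Ω → Belief Ω → ℝ) (h₀ : DualFeas v V₀ φ₀)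
    (hmin₀ : ∀ V' φ', DualFeas v V' φ' → ∑ ω, p ω * V₀ ω ≤ ∑ ω, p ω * V' ω) :
    ∃ μ : Ω → Measure (Fin n → Belief Ω), Feasible p n μ ∧
      ∑ ω, p ω * V₀ ω = ∑ ω, p ω * ∫ x, v ω x ∂(μ ω) := by
  classical
  have hex := fun f : Ω → C(Fin n → Belief Ω, ℝ) =>
    dual_min p hp hpsum (fun ω x => f ω x) (fun ω => (f ω).continuous)
  choose V φ hD _ hmin using hex
  let S : (Ω → C(Fin n → Belief Ω, ℝ)) → ℝ := fun f => ∑ ω, p ω * V f ω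
  have S_le : ∀ f V' φ', DualFeas (fun ω x => f ω x) V' φ' → S f ≤ ∑ ω, p ω * V' ω :=
    fun f V' φ' h => hmin f V' φ' h
  have S_add : ∀ f g, S (f + g) ≤ S f + S g := by
    intro f g
    refine (S_le (f + g) _ _ ((hD f).add' (hD g))).trans (le_of_eq ?_)
    simp only [S, mul_add, Finset.sum_add_distrib]
  have S_hom' : ∀ c : ℝ, 0 < c → ∀ f, S (c • f) ≤ c * S f := by
    intro c hc f
    refine (S_le (c • f) _ _ ((hD f).smul' hc.le)).trans (le_of_eq ?_)
    simp only [S, Finset.mul_sum]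
    exact Finset.sum_congr rfl fun ω _ => by ring
  have S_hom : ∀ c : ℝ, 0 < c → ∀ f, S (c • f) = c * S f := by
    intro c hc f
    refine le_antisymm (S_hom' c hc f) ?_
    have := S_hom' c⁻¹ (inv_pos.2 hc) (c • f)
    rw [smul_smul, inv_mul_cancel₀ hc.ne', one_smul] at this
    calc c * S f ≤ c * (c⁻¹ * S (c • f)) := mul_le_mul_of_nonneg_left this hc.le
      _ = _ := by rw [← mul_assoc, mul_inv_cancel₀ hc.ne', one_mul]
  have S_zero : S 0 = 0 := by
    have := S_hom 2 (by norm_num) 0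
    rw [smul_zero] at this
    linarith
  let v' : Ω → C(Fin n → Belief Ω, ℝ) := fun ω => ⟨v ω, hv ω⟩
  have hSv : S v' = ∑ ω, p ω * V₀ ω := le_antisymm (S_le v' _ _ h₀) (hmin₀ _ _ (hD v'))
  have hH : ∀ c : ℝ, c • v' = 0 → (RingHom.id ℝ) c • S v' = 0 := by
    intro c hc
    rcases smul_eq_zero.1 hc with h | h
    · simp [h]
    · simp [h, S_zero]
  obtain ⟨L, hL1, hL2⟩ := exists_extension_of_le_sublinear
    (LinearPMap.mkSpanSingleton' v' (S v') hH) S S_hom S_add (by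
      rintro ⟨x, hx⟩
      obtain ⟨c, rfl⟩ := Submodule.mem_span_singleton.1 hx
      rw [LinearPMap.mkSpanSingleton'_apply]
      simp only [RingHom.id_apply, smul_eq_mul]
      rcases lt_trichotomy c 0 with hc | hc | hc
      · have h1 := S_add (c • v') ((-c) • v')
        rw [← add_smul, add_neg_cancel, zero_smul, S_zero, S_hom (-c) (by linarith)] at h1
        linarith
      · simp [hc, S_zero]
      · rw [S_hom c hc])
  have hLv : L v' = ∑ ω, p ω * V₀ ω := by
    have := hL1 ⟨v', Submodule.mem_span_singleton_self v'⟩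
    rw [← hSv]
    exact this.trans (LinearPMap.mkSpanSingleton'_apply_self v' (S v') hH _)
  have hpos : ∀ f : Ω → C(Fin n → Belief Ω, ℝ), 0 ≤ f → 0 ≤ L f := by
    intro f hf
    have h1 := (hL2 (-f)).trans (S_le (-f) (fun _ => 0) (fun _ _ _ => 0) ⟨fun ω x => by
      have : 0 ≤ f ω x := hf ω x
      simpa using this, fun i x => by simp⟩)
    simp only [map_neg, mul_zero, Finset.sum_const_zero] at h1
    linarith
  have hconst : ∀ c : Ω → ℝ, L (fun ω => ContinuousMap.const _ (c ω)) = ∑ ω, p ω * c ω := by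
    have hle : ∀ c : Ω → ℝ, L (fun ω => ContinuousMap.const _ (c ω)) ≤ ∑ ω, p ω * c ω := by
      intro c
      exact (hL2 _).trans (S_le _ c (fun _ _ _ => 0) ⟨fun ω x => by simp, fun i x => by simp⟩)
    intro c
    refine le_antisymm (hle c) ?_
    have h1 := hle (fun ω => - c ω)
    have h2 : (fun ω => ContinuousMap.const (Fin n → Belief Ω) (-c ω)) =
        -(fun ω => ContinuousMap.const (Fin n → Belief Ω) (c ω)) := by
      ext; simp
    rw [h2, map_neg] at h1
    simp only [mul_neg, Finset.sum_neg_distrib] at h1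
    linarith
  have htest : ∀ (i : Fin n) (φ : Ω → Belief Ω → ℝ) (hφ : ∀ ω, Continuous (φ ω)),
      (∀ x : Belief Ω, ∑ ω, x.1 ω * φ ω x = 0) →
      L (fun ω => ⟨fun x => φ ω (x i), (hφ ω).comp (continuous_apply i)⟩) = 0 := by
    have hle : ∀ (i : Fin n) (φ : Ω → Belief Ω → ℝ) (hφ : ∀ ω, Continuous (φ ω)),
        (∀ x : Belief Ω, ∑ ω, x.1 ω * φ ω x = 0) →
        L (fun ω => ⟨fun x => φ ω (x i), (hφ ω).comp (continuous_apply i)⟩) ≤ 0 := by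
      intro i φ hφ h0
      refine (hL2 _).trans ((S_le _ (fun _ => 0) (fun j ω x => if j = i then φ ω x else 0)
        ⟨fun ω x => ?_, fun j x => ?_⟩).trans ?_)
      · simp
      · by_cases hj : j = i
        · simpa [hj] using (h0 x).le
        · simp [hj]
      · simp
    intro i φ hφ h0
    refine le_antisymm (hle i φ hφ h0) ?_
    have h1 := hle i (fun ω x => - φ ω x) (fun ω => (hφ ω).neg) (fun x => by simp [h0 x])
    have h2 : (fun ω => (⟨fun x => -φ ω (x i), (hφ ω).neg.comp (continuous_apply i)⟩ :
          C(Fin n → Belief Ω, ℝ))) =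
        -(fun ω => (⟨fun x => φ ω (x i), (hφ ω).comp (continuous_apply i)⟩ :
          C(Fin n → Belief Ω, ℝ))) := by
      ext; simp
    rw [h2, map_neg] at h1
    linarith
  have hr := fun ω => riesz_compact (L.comp (LinearMap.single ℝ (fun _ => C(Fin n → Belief Ω, ℝ)) ω))
    (fun f hf => hpos _ (by
      intro ω'
      by_cases h : ω' = ω
      · subst h; simpa using hf
      · simp [Pi.single_eq_of_ne h]))
  choose ν hνf hν using hr
  have hLsum : ∀ f : Ω → C(Fin n → Belief Ω, ℝ), L f = ∑ ω, ∫ x, f ω x ∂(ν ω) := by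
    intro f
    simp only [hν, LinearMap.comp_apply, LinearMap.coe_single]
    rw [← map_sum, Finset.univ_sum_single]
  have hmass : ∀ ω, (ν ω) Set.univ = ENNReal.ofReal (p ω) := by
    intro ω
    have h1 := hconst (Pi.single ω 1)
    rw [hLsum, Finset.sum_eq_single ω, Finset.sum_eq_single ω] at h1
    · simp only [Pi.single_eq_same, ContinuousMap.const_apply, integral_const, smul_eq_mul,
        mul_one] at h1
      rw [← h1, measureReal_def, ENNReal.ofReal_toReal (measure_ne_top _ _)]
    · intro b _ hb; simp [Pi.single_eq_of_ne hb]
    · simp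
    · intro b _ hb; simp [Pi.single_eq_of_ne hb]
    · simp
  let μ : Ω → Measure (Fin n → Belief Ω) := fun ω => ENNReal.ofReal (p ω)⁻¹ • ν ω
  have hμint : ∀ ω (f : (Fin n → Belief Ω) → ℝ), p ω * ∫ x, f x ∂(μ ω) = ∫ x, f x ∂(ν ω) := by
    intro ω f
    simp only [μ]
    rw [integral_smul_measure, ENNReal.toReal_ofReal (inv_pos.2 (hp ω)).le, smul_eq_mul,
      ← mul_assoc, mul_inv_cancel₀ (hp ω).ne', one_mul]
  refine ⟨μ, feasible_of_test p hp (fun ω => ⟨?_⟩) ?_, ?_⟩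
  · simp only [μ, Measure.smul_apply, hmass, smul_eq_mul]
    rw [← ENNReal.ofReal_mul (inv_pos.2 (hp ω)).le, inv_mul_cancel₀ (hp ω).ne', ENNReal.ofReal_one]
  · intro i φ hφ h0
    simp only [hμint]
    have := htest i φ hφ h0
    rw [hLsum] at this
    exact this
  · simp only [hμint]
    rw [← hLv, hLsum]
    rfl

lemma weak_duality {Ω : Type} [Fintype Ω] [MeasurableSpace Ω] [MeasurableSingletonClass Ω]
    (p : Ω → ℝ) (hp : ∀ ω, 0 < p ω) {n : ℕ} {v : Ω → (Fin n → Belief Ω) → ℝ}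
    (hv : ∀ ω, Continuous (v ω)) {V : Ω → ℝ} {φ : Fin n → Ω → Belief Ω → ℝ}
    (hc : ∀ i ω, Continuous (φ i ω))
    (h1 : ∀ (ω : Ω) (x : Fin n → Belief Ω), v ω x ≤ V ω + ∑ i : Fin n, φ i ω (x i))
    (h2 : ∀ (i : Fin n) (x : Belief Ω), ∑ ω : Ω, x.1 ω * φ i ω x = 0)
    {μ : Ω → Measure (Fin n → Belief Ω)} (hμ : Feasible p n μ) :
    ∑ ω, p ω * ∫ x, v ω x ∂(μ ω) ≤ ∑ ω, p ω * V ω := by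
  have hpr := hμ.1
  have hi : ∀ ω (f : (Fin n → Belief Ω) → ℝ), Continuous f → Integrable f (μ ω) := by
    intro ω f hf
    obtain ⟨C, hC⟩ := bdd_of_cont (fun _ : Unit => f) (fun _ => hf)
    exact Integrable.of_bound hf.measurable.aestronglyMeasurable C
      (Filter.Eventually.of_forall fun x => hC () x)
  have hci : ∀ i ω, Continuous fun x : Fin n → Belief Ω => φ i ω (x i) :=
    fun i ω => (hc i ω).comp (continuous_apply i)
  have hω : ∀ ω, ∫ x, v ω x ∂(μ ω) ≤ V ω + ∑ i, ∫ x, φ i ω (x i) ∂(μ ω) := by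
    intro ω
    have hs : Continuous fun x : Fin n → Belief Ω => ∑ i, φ i ω (x i) :=
      continuous_finsetSum _ fun i _ => hci i ω
    calc ∫ x, v ω x ∂(μ ω) ≤ ∫ x, (V ω + ∑ i, φ i ω (x i)) ∂(μ ω) :=
          integral_mono (hi ω _ (hv ω)) (hi ω _ (continuous_const.add hs)) (h1 ω)
      _ = _ := by
        rw [integral_add (hi ω _ continuous_const) (hi ω _ hs),
          integral_finsetSum _ fun i _ => hi ω _ (hci i ω)]
        simp
  calc ∑ ω, p ω * ∫ x, v ω x ∂(μ ω)
      ≤ ∑ ω, p ω * (V ω + ∑ i, ∫ x, φ i ω (x i) ∂(μ ω)) :=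
        Finset.sum_le_sum fun ω _ => mul_le_mul_of_nonneg_left (hω ω) (hp ω).le
    _ = ∑ ω, p ω * V ω + ∑ i, ∑ ω, p ω * ∫ x, φ i ω (x i) ∂(μ ω) := by
        simp only [mul_add, Finset.sum_add_distrib, Finset.mul_sum]
        rw [Finset.sum_comm (f := fun ω i => p ω * ∫ x, φ i ω (x i) ∂(μ ω))]
    _ = ∑ ω, p ω * V ω := by
        rw [Finset.sum_eq_zero fun i _ => feasible_test p hp hμ i (φ i) (hc i) (h2 i), add_zero]

/-- for continuous utilities the dual optimum is attained. -/
theorem dual_optimum_attained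
    {Ω : Type} [Fintype Ω] [Nonempty Ω] [MeasurableSpace Ω] [MeasurableSingletonClass Ω]
    (p : Ω → ℝ) (hp : ∀ ω, 0 < p ω) (hpsum : ∑ ω : Ω, p ω = 1)
    (n : ℕ) (hn : 1 ≤ n)
    (v : Ω → (Fin n → Belief Ω) → ℝ)
    (hv : ∀ ω, Continuous (v ω)) :
    ∃ (V : Ω → ℝ) (φ : Fin n → Ω → Belief Ω → ℝ),
      (∀ (i : Fin n) (ω : Ω), Continuous (φ i ω)) ∧
      (∀ (ω : Ω) (x : Fin n → Belief Ω), v ω x ≤ V ω + ∑ i : Fin n, φ i ω (x i)) ∧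
      (∀ (i : Fin n) (x : Belief Ω), ∑ ω : Ω, x.1 ω * φ i ω x = 0) ∧
      ∑ ω : Ω, p ω * V ω = Val p n v := by
  obtain ⟨V, φ, hD, hMod, hmin⟩ := dual_min p hp hpsum v hv
  have hφc : ∀ i ω, Continuous (φ i ω) := fun i ω => mod_continuous hv (hMod i) ω
  let φ' : Fin n → Ω → Belief Ω → ℝ := fun i ω x => φ i ω x - ∑ ω', x.1 ω' * φ i ω' x
  have hc : ∀ i ω, Continuous (φ' i ω) := fun i ω =>
    (hφc i ω).sub (continuous_finsetSum _ fun ω' _ => (cont_coord ω').mul (hφc i ω'))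
  have h1 : ∀ (ω : Ω) (x : Fin n → Belief Ω), v ω x ≤ V ω + ∑ i : Fin n, φ' i ω (x i) := by
    intro ω x
    have a1 := hD.1 ω x
    have a2 : ∑ i, φ i ω (x i) ≤ ∑ i, φ' i ω (x i) := by
      refine Finset.sum_le_sum fun i _ => ?_
      have := hD.2 i (x i)
      simp only [φ']
      linarith
    linarith
  have h2 : ∀ (i : Fin n) (x : Belief Ω), ∑ ω : Ω, x.1 ω * φ' i ω x = 0 := by
    intro i x
    have hx : ∑ ω, x.1 ω = 1 := x.2.2
    simp only [φ', mul_sub, Finset.sum_sub_distrib]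
    rw [← Finset.sum_mul, hx, one_mul, sub_self]
  refine ⟨V, φ', hc, h1, h2, ?_⟩
  obtain ⟨μ, hμ, hval⟩ := strong_duality p hp hpsum n v hv V φ hD hmin
  symm
  apply IsGreatest.csSup_eq
  refine ⟨⟨μ, hμ, hval⟩, ?_⟩
  rintro r ⟨μ', hμ', rfl⟩
  exact weak_duality p hp hv hc h1 h2 hμ'
end

section
/- Let Ω be a finite set with |Ω| ≥ 2, p a full-support probability vector on Ω, n ≥ 1, ω₀ ∈ Ω, and let v : Δ(Ω)^n → ℝ be bounded and upper semicontinuous. Consider the one-state persuasion problem with utilities v^{ω₀} = v and v^ω ≡ 0 for ω ≠ ω₀. Then its value Val equals p(ω₀) times the supremum of ∫ v dπ over Borel probability measures π on Δ(Ω)^n whose i-th marginals π_i satisfy ∫ x(ω)/x(ω₀) dπ_i(x) ≤ p(ω)/p(ω₀) for every i ∈ {1,…,n} and every ω ≠ ω₀ (integrals in [0,∞] with conventions 0/0 = 0 and a/0 = ∞ for a > 0) and whose support has cardinality at most n·(|Ω|−1)+1; moreover this supremum is attained. -/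
open MeasureTheory

/-! ### Part 1: abstract finite-support reduction -/

open scoped ENNReal Topology

theorem lsc_ennreal_mul {Y : Type*} [TopologicalSpace Y] {u w : Y → ℝ≥0∞}
    (hu : LowerSemicontinuous u) (hw : LowerSemicontinuous w) :
    LowerSemicontinuous (fun y => u y * w y) := by
  intro y c hc
  have hc' : c < u y * w y := hc
  obtain ⟨a, ha, h1⟩ : ∃ a < u y, c < a * w y := by
    by_contra! h
    exact absurd (ENNReal.mul_le_of_forall_lt (fun a ha b hb => (mul_le_mul_right hb.le a).trans (h a ha))) (not_le.2 hc')
  obtain ⟨b, hb, h2⟩ : ∃ b < w y, c < a * b := by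
    by_contra! h
    exact absurd (ENNReal.mul_le_of_forall_lt (fun a' ha' b hb => (mul_le_mul_left ha'.le b).trans (h b hb))) (not_le.2 h1)
  filter_upwards [hu y a ha, hw y b hb] with z hz1 hz2
  exact h2.trans_le (mul_le_mul' hz1.le hz2.le)

/-- Costs `c` are achievable by a measure with at most `N` atoms. -/
def Ach {X J : Type*} (f : J → X → ℝ≥0∞) (N : ℕ) (c : J → ℝ) : Prop :=
  ∃ (l : stdSimplex ℝ (Fin N)) (q : Fin N → X), (∀ j, 0 ≤ c j) ∧
    ∀ j, ∑ k, ENNReal.ofReal (l.1 k) * f j (q k) ≤ ENNReal.ofReal (c j)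

theorem ach_closed {X J : Type*} [TopologicalSpace X] [CompactSpace X]
    (f : J → X → ℝ≥0∞) (hf : ∀ j, LowerSemicontinuous (f j)) (N : ℕ) :
    IsClosed {c | Ach f N c} := by
  have hcl : IsClosed {z : (J → ℝ) × (stdSimplex ℝ (Fin N) × (Fin N → X)) |
      (∀ j, 0 ≤ z.1 j) ∧ ∀ j, ∑ k, ENNReal.ofReal (z.2.1.1 k) * f j (z.2.2 k) ≤
        ENNReal.ofReal (z.1 j)} := by
    rw [Set.ofPred_and]
    apply IsClosed.inter
    · have : ∀ j, IsClosed {z : (J → ℝ) × (stdSimplex ℝ (Fin N) × (Fin N → X)) | 0 ≤ z.1 j} :=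
        fun j => isClosed_le continuous_const (by fun_prop)
      simpa only [Set.ofPred_forall] using isClosed_iInter this
    · rw [Set.ofPred_forall]
      refine isClosed_iInter fun j => ?_
      have hl : LowerSemicontinuous (fun y : stdSimplex ℝ (Fin N) × (Fin N → X) =>
          ∑ k, ENNReal.ofReal (y.1.1 k) * f j (y.2 k)) := by
        apply lowerSemicontinuous_sum
        intro k _
        apply lsc_ennreal_mul
        · apply Continuous.lowerSemicontinuous
          apply ENNReal.continuous_ofReal.comp
          exact (continuous_apply k).comp (continuous_subtype_val.comp continuous_fst)
        · exact (hf j).comp (by fun_prop)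
      have h2 := hl.isClosed_epigraph
      have h3 : Continuous (fun z : (J → ℝ) × (stdSimplex ℝ (Fin N) × (Fin N → X)) =>
          (z.2, ENNReal.ofReal (z.1 j))) :=
        continuous_snd.prodMk (ENNReal.continuous_ofReal.comp (by fun_prop))
      exact h2.preimage h3
  have := isClosedMap_fst_of_compactSpace _ hcl
  convert this using 1
  ext c
  constructor
  · rintro ⟨l, q, h⟩
    exact ⟨(c, (l, q)), h, rfl⟩
  · rintro ⟨⟨c', l, q⟩, h, rfl⟩
    exact ⟨l, q, h⟩

theorem ach_of_zero {X J : Type*} {f : J → X → ℝ≥0∞} {N : ℕ} {c : J → ℝ}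
    (l : Fin (N+1) → ℝ) (hl : l ∈ stdSimplex ℝ (Fin (N+1))) (q : Fin (N+1) → X)
    (hc : ∀ j, 0 ≤ c j)
    (h : ∀ j, ∑ k, ENNReal.ofReal (l k) * f j (q k) ≤ ENNReal.ofReal (c j))
    (k₀ : Fin (N+1)) (h0 : l k₀ = 0) : Ach f N c := by
  refine ⟨⟨fun k => l (k₀.succAbove k), fun k => hl.1 _, ?_⟩, fun k => q (k₀.succAbove k), hc, ?_⟩
  · have := hl.2
    rw [Fin.sum_univ_succAbove _ k₀, h0, zero_add] at this
    exact this
  · intro j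
    have := h j
    rw [Fin.sum_univ_succAbove _ k₀, h0] at this
    simpa using this

theorem ach_step {X J : Type*} [Fintype J] {f : Option J → X → ℝ≥0∞} {N : ℕ}
    (hN : Fintype.card J + 1 ≤ N) {c : Option J → ℝ} (h : Ach f (N+1) c) : Ach f N c := by
  obtain ⟨⟨l, hl⟩, q, hc, h⟩ := h
  by_cases hz : ∃ k, l k = 0
  · obtain ⟨k, hk⟩ := hz
    exact ach_of_zero l hl q hc h k hk
  push Not at hz
  have hpos : ∀ k, 0 < l k := fun k => lt_of_le_of_ne (hl.1 k) (hz k).symm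
  have hfin : ∀ j k, f j (q k) ≠ ∞ := by
    intro j k hk
    have h1 := (Finset.single_le_sum (f := fun k => ENNReal.ofReal (l k) * f j (q k))
      (fun _ _ => zero_le) (Finset.mem_univ k)).trans (h j)
    simp only [hk] at h1
    rw [ENNReal.mul_top (by simpa using hpos k)] at h1
    exact absurd (top_le_iff.1 h1) ENNReal.ofReal_ne_top
  set F : Option J → Fin (N+1) → ℝ := fun j k => (f j (q k)).toReal with hF
  have key : ∀ (m : Fin (N+1) → ℝ), (∀ k, 0 ≤ m k) → ∀ j,
      ∑ k, ENNReal.ofReal (m k) * f j (q k) = ENNReal.ofReal (∑ k, m k * F j k) := by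
    intro m hm j
    rw [ENNReal.ofReal_sum_of_nonneg (fun k _ => mul_nonneg (hm k) ENNReal.toReal_nonneg)]
    refine Finset.sum_congr rfl fun k _ => ?_
    rw [ENNReal.ofReal_mul (hm k), ENNReal.ofReal_toReal (hfin j k)]
  have hr : ∀ j, ∑ k, l k * F j k ≤ c j := by
    intro j
    have := h j
    simp only at this
    rw [key l hl.1 j] at this
    exact (ENNReal.ofReal_le_ofReal_iff (hc j)).1 this
  let T : (Fin (N+1) → ℝ) →ₗ[ℝ] (Option J → ℝ) :=
    LinearMap.pi fun o => match o with
      | none => ∑ k, LinearMap.proj k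
      | some j => ∑ k, F (some j) k • LinearMap.proj k
  have hker : LinearMap.ker T ≠ ⊥ := by
    apply LinearMap.ker_ne_bot_of_finrank_lt
    simp; omega
  obtain ⟨g0, hg0, hgne0⟩ := (Submodule.ne_bot_iff _).1 hker
  have hgs0 : ∑ k, g0 k = 0 := by
    have := congrFun (LinearMap.mem_ker.1 hg0) none
    simpa [T] using this
  have hgj0 : ∀ j, ∑ k, g0 k * F (some j) k = 0 := by
    intro j
    have := congrFun (LinearMap.mem_ker.1 hg0) (some j)
    simpa [T, mul_comm] using this
  obtain ⟨g, hgne, hgs, hgj, hgn⟩ : ∃ g : Fin (N+1) → ℝ, g ≠ 0 ∧ ∑ k, g k = 0 ∧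
      (∀ j, ∑ k, g k * F (some j) k = 0) ∧ ∑ k, g k * F none k ≤ 0 := by
    rcases le_total (∑ k, g0 k * F none k) 0 with h' | h'
    · exact ⟨g0, hgne0, hgs0, hgj0, h'⟩
    · refine ⟨-g0, neg_ne_zero.2 hgne0, ?_, ?_, ?_⟩ <;> simp [hgs0, hgj0, h']
  have hneg : (Finset.univ.filter fun k => g k < 0).Nonempty := by
    by_contra hne
    rw [Finset.not_nonempty_iff_eq_empty, Finset.filter_eq_empty_iff] at hne
    have h1 : ∀ k ∈ Finset.univ, 0 ≤ g k := fun k hk => not_lt.1 (hne hk)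
    have h2 := (Finset.sum_eq_zero_iff_of_nonneg h1).1 hgs
    exact hgne (funext fun k => h2 k (Finset.mem_univ k))
  obtain ⟨k₀, hk₀, hmin⟩ := Finset.exists_min_image _ (fun k => l k / (- g k)) hneg
  have hgk : g k₀ < 0 := (Finset.mem_filter.1 hk₀).2
  set t := l k₀ / (- g k₀) with ht
  have ht0 : 0 ≤ t := div_nonneg (hl.1 _) (by linarith)
  have hl' : ∀ k, 0 ≤ l k + t * g k := by
    intro k
    by_cases hk : g k < 0
    · have := hmin k (by simp [hk])
      rw [le_div_iff₀ (by linarith)] at this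
      linarith
    · have := mul_nonneg ht0 (not_lt.1 hk)
      have := hl.1 k
      linarith
  refine ach_of_zero (fun k => l k + t * g k) ⟨hl', ?_⟩ q hc ?_ k₀ ?_
  · rw [Finset.sum_add_distrib, ← Finset.mul_sum, hgs, hl.2]; simp
  · intro j
    rw [key _ hl' j]
    apply ENNReal.ofReal_le_ofReal
    have e : ∑ k, (l k + t * g k) * F j k = ∑ k, l k * F j k + t * ∑ k, g k * F j k := by
      rw [Finset.mul_sum, ← Finset.sum_add_distrib]
      exact Finset.sum_congr rfl fun k _ => by ring
    rw [e]
    rcases j with _ | j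
    · have := mul_nonpos_of_nonneg_of_nonpos ht0 hgn
      linarith [hr none]
    · rw [hgj j]; linarith [hr (some j)]
  · have : - g k₀ ≠ 0 := by linarith
    have : g k₀ ≠ 0 := hgk.ne
    simp only [ht]; field_simp; ring

theorem ach_reduce {X J : Type*} [Fintype J] {f : Option J → X → ℝ≥0∞} {c : Option J → ℝ} (N : ℕ)
    (h : Ach f (Fintype.card J + 1 + N) c) : Ach f (Fintype.card J + 1) c := by
  induction N with
  | zero => exact h
  | succ N ih => exact ih (ach_step (by omega) h)

theorem ach_convex {X J : Type*} [Fintype J] (f : Option J → X → ℝ≥0∞) :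
    Convex ℝ {c | Ach f (Fintype.card J + 1) c} := by
  rintro c ⟨l, q, hc, h⟩ c' ⟨l', q', hc', h'⟩ a b ha hb hab
  apply ach_reduce (Fintype.card J + 1)
  refine ⟨⟨Fin.append (fun k => a * l.1 k) (fun k => b * l'.1 k), ?_, ?_⟩, Fin.append q q', ?_, ?_⟩
  · intro k
    refine Fin.addCases (fun k => ?_) (fun k => ?_) k
    · simpa using mul_nonneg ha (l.2.1 k)
    · rw [Fin.append_right]
      exact mul_nonneg hb (l'.2.1 k)
  · rw [Fin.sum_univ_add]
    simp only [Fin.append_left, Fin.append_right]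
    rw [← Finset.mul_sum, ← Finset.mul_sum, l.2.2, l'.2.2]
    simpa using hab
  · intro j
    have := mul_nonneg ha (hc j)
    have := mul_nonneg hb (hc' j)
    simp; linarith
  · intro j
    rw [Fin.sum_univ_add]
    simp only [Fin.append_left, Fin.append_right, Pi.add_apply, Pi.smul_apply, smul_eq_mul]
    rw [ENNReal.ofReal_add (mul_nonneg ha (hc j)) (mul_nonneg hb (hc' j)),
      ENNReal.ofReal_mul ha, ENNReal.ofReal_mul hb]
    simp only [ENNReal.ofReal_mul ha, ENNReal.ofReal_mul hb, mul_assoc]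
    rw [← Finset.mul_sum, ← Finset.mul_sum]
    gcongr
    · exact h j
    · exact h' j

theorem ach_point {X J : Type*} {f : J → X → ℝ≥0∞} (N : ℕ) {c : J → ℝ} (x : X)
    (hc : ∀ j, 0 ≤ c j) (h : ∀ j, f j x ≤ ENNReal.ofReal (c j)) : Ach f (N + 1) c := by
  refine ⟨⟨_, single_mem_stdSimplex ℝ 0⟩, fun _ => x, hc, fun j => ?_⟩
  rw [← Finset.sum_mul, ← ENNReal.ofReal_sum_of_nonneg, (single_mem_stdSimplex ℝ 0).2]
  · simpa using h j
  · exact fun k _ => (single_mem_stdSimplex ℝ 0).1 k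

theorem ach_integral {X J : Type*} [Fintype J] [TopologicalSpace X] [CompactSpace X]
    [MeasurableSpace X] (f : Option J → X → ℝ≥0∞) (hf : ∀ j, LowerSemicontinuous (f j))
    (hm : ∀ j, Measurable (f j)) (c : Option J → ℝ) (hc : ∀ j, 0 ≤ c j)
    (π : Measure X) [IsProbabilityMeasure π]
    (h : ∀ j, ∫⁻ x, f j x ∂π ≤ ENNReal.ofReal (c j)) : Ach f (Fintype.card J + 1) c := by
  have hne : ∀ j, ∫⁻ x, f j x ∂π ≠ ∞ := fun j => ((h j).trans_lt ENNReal.ofReal_lt_top).ne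
  have hfin : ∀ᵐ x ∂π, ∀ j, f j x < ∞ :=
    ae_all_iff.2 fun j => ae_lt_top (hm j) (hne j)
  have hintg : Integrable (fun x => (fun j => (f j x).toReal : Option J → ℝ)) π :=
    Integrable.of_eval fun j => integrable_toReal_of_lintegral_ne_top (hm j).aemeasurable (hne j)
  have hmem := (ach_convex f).integral_mem (ach_closed f hf _) (μ := π)
    (f := fun x => (fun j => (f j x).toReal)) (by
      filter_upwards [hfin] with x hx
      refine ach_point _ x (fun j => ENNReal.toReal_nonneg) fun j => ?_
      rw [ENNReal.ofReal_toReal (hx j).ne]) hintg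
  obtain ⟨l, q, _, hq⟩ := hmem
  refine ⟨l, q, hc, fun j => (hq j).trans (ENNReal.ofReal_le_ofReal ?_)⟩
  rw [eval_integral (fun j => integrable_toReal_of_lintegral_ne_top (hm j).aemeasurable (hne j)),
    integral_toReal (hm j).aemeasurable (ae_lt_top (hm j) (hne j))]
  exact ENNReal.toReal_le_of_le_ofReal (hc j) (h j)

/-! ### Part 2: feasibility in terms of marginals -/

theorem lintegral_jointP {Ω : Type} [Fintype Ω] [MeasurableSpace Ω] [MeasurableSingletonClass Ω]
    (p : Ω → ℝ) {X : Type} [MeasurableSpace X] (μ : Ω → Measure X)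
    [∀ ω, IsProbabilityMeasure (μ ω)] (g : Ω × X → ℝ≥0∞) (hg : Measurable g) :
    ∫⁻ z, g z ∂(jointP p μ) = ∑ ω, ENNReal.ofReal (p ω) * ∫⁻ x, g (ω, x) ∂(μ ω) := by
  rw [jointP, lintegral_finsetSum_measure]
  refine Finset.sum_congr rfl fun ω _ => ?_
  rw [lintegral_smul_measure, Measure.dirac_prod, lintegral_map hg (by fun_prop), smul_eq_mul]

theorem isFiniteMeasure_jointP {Ω : Type} [Fintype Ω] [MeasurableSpace Ω]
    [MeasurableSingletonClass Ω]
    (p : Ω → ℝ) {X : Type} [MeasurableSpace X] (μ : Ω → Measure X)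
    [∀ ω, IsProbabilityMeasure (μ ω)] : IsFiniteMeasure (jointP p μ) := by
  constructor
  have := lintegral_jointP p μ (fun _ => 1) measurable_const
  rw [lintegral_one] at this
  rw [this]
  simp

theorem measurable_coord {Ω : Type} [Fintype Ω] (ω : Ω) :
    Measurable (fun x : Belief Ω => x.1 ω) :=
  (measurable_pi_apply ω).comp measurable_subtype_coe

theorem feas_iff {Ω : Type} [Fintype Ω] [MeasurableSpace Ω] [MeasurableSingletonClass Ω]
    (p : Ω → ℝ) (n : ℕ) (μ : Ω → Measure (Fin n → Belief Ω))
    [∀ ω, IsProbabilityMeasure (μ ω)] (i : Fin n) (ω' : Ω) :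
    ((fun z : Ω × (Fin n → Belief Ω) => (z.2 i).1 ω')
      =ᵐ[jointP p μ]
      (jointP p μ)[Set.indicator {z : Ω × (Fin n → Belief Ω) | z.1 = ω'} (fun _ => (1 : ℝ)) |
        MeasurableSpace.comap (fun z : Ω × (Fin n → Belief Ω) => z.2 i) inferInstance]) ↔
    (∑ ω, ENNReal.ofReal (p ω) • (μ ω).map (fun q => q i)).withDensity
      (fun x => ENNReal.ofReal (x.1 ω')) = ENNReal.ofReal (p ω') • (μ ω').map (fun q => q i) := by
  classical
  have := isFiniteMeasure_jointP p μ
  have hev : Measurable (fun z : Ω × (Fin n → Belief Ω) => z.2 i) :=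
    (measurable_pi_apply i).comp measurable_snd
  have hle : MeasurableSpace.comap (fun z : Ω × (Fin n → Belief Ω) => z.2 i) inferInstance ≤
      (inferInstance : MeasurableSpace (Ω × (Fin n → Belief Ω))) := hev.comap_le
  have hmE : MeasurableSet {z : Ω × (Fin n → Belief Ω) | z.1 = ω'} :=
    measurable_fst (measurableSet_singleton ω')
  have hind : Integrable (Set.indicator {z : Ω × (Fin n → Belief Ω) | z.1 = ω'}
      (fun _ => (1 : ℝ))) (jointP p μ) := (integrable_const _).indicator hmE
  have hcm : Measurable (fun z : Ω × (Fin n → Belief Ω) => (z.2 i).1 ω') :=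
    (measurable_coord ω').comp hev
  have hcint : Integrable (fun z : Ω × (Fin n → Belief Ω) => (z.2 i).1 ω') (jointP p μ) := by
    refine Integrable.of_bound hcm.aestronglyMeasurable 1 (ae_of_all _ fun z => ?_)
    rw [Real.norm_eq_abs, abs_of_nonneg ((z.2 i).2.1 ω')]
    rw [← (z.2 i).2.2]
    exact Finset.single_le_sum (f := (z.2 i).1) (fun k _ => (z.2 i).2.1 k) (Finset.mem_univ ω')
  -- both sides of the set-wise identity
  have hL : ∀ B : Set (Belief Ω), MeasurableSet B →
      ∫⁻ z in (fun z : Ω × (Fin n → Belief Ω) => z.2 i) ⁻¹' B, ENNReal.ofReal ((z.2 i).1 ω')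
        ∂(jointP p μ) = (∑ ω, ENNReal.ofReal (p ω) • (μ ω).map (fun q => q i)).withDensity
      (fun x => ENNReal.ofReal (x.1 ω')) B := by
    intro B hB
    have hm1 : Measurable (B.indicator fun x : Belief Ω => ENNReal.ofReal (x.1 ω')) :=
      (measurable_coord ω').ennreal_ofReal.indicator hB
    rw [withDensity_apply _ hB, ← lintegral_indicator hB, ← lintegral_indicator (hev hB),
      lintegral_finsetSum_measure]
    have : ((fun z : Ω × (Fin n → Belief Ω) => z.2 i) ⁻¹' B).indicator
        (fun z => ENNReal.ofReal ((z.2 i).1 ω')) =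
        fun z => (B.indicator fun x : Belief Ω => ENNReal.ofReal (x.1 ω')) (z.2 i) := by
      ext z; simp [Set.indicator]
    rw [this]
    refine (lintegral_jointP p μ _ (hm1.comp hev)).trans ?_
    refine Finset.sum_congr rfl fun ω _ => ?_
    rw [lintegral_smul_measure, lintegral_map hm1 (measurable_pi_apply i), smul_eq_mul]
    rfl
  have hR : ∀ B : Set (Belief Ω), MeasurableSet B →
      jointP p μ ((fun z : Ω × (Fin n → Belief Ω) => z.2 i) ⁻¹' B ∩ {z | z.1 = ω'})
        = (ENNReal.ofReal (p ω') • (μ ω').map (fun q => q i)) B := by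
    intro B hB
    rw [← lintegral_indicator_one ((hev hB).inter hmE), lintegral_jointP p μ _
      (measurable_one.indicator ((hev hB).inter hmE)), Finset.sum_eq_single ω']
    · rw [Measure.smul_apply, smul_eq_mul, Measure.map_apply (measurable_pi_apply i) hB,
        ← lintegral_indicator_one (measurable_pi_apply i hB)]
      congr 2
      ext x
      simp [Set.indicator]
    · intro ω _ hω
      simp [Set.indicator, hω]
    · simp
  have hI : ∀ B : Set (Belief Ω), MeasurableSet B →
      ∫ z in (fun z : Ω × (Fin n → Belief Ω) => z.2 i) ⁻¹' B,
        Set.indicator {z : Ω × (Fin n → Belief Ω) | z.1 = ω'} (fun _ => (1 : ℝ)) z ∂(jointP p μ)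
      = ((ENNReal.ofReal (p ω') • (μ ω').map (fun q => q i)) B).toReal := by
    intro B hB
    rw [← hR B hB, setIntegral_indicator hmE]
    simp [Measure.real]
  have hI2 : ∀ B : Set (Belief Ω), MeasurableSet B →
      ENNReal.ofReal (∫ z in (fun z : Ω × (Fin n → Belief Ω) => z.2 i) ⁻¹' B,
        (z.2 i).1 ω' ∂(jointP p μ))
      = (∑ ω, ENNReal.ofReal (p ω) • (μ ω).map (fun q => q i)).withDensity
      (fun x => ENNReal.ofReal (x.1 ω')) B := by
    intro B hB
    rw [← hL B hB, ofReal_integral_eq_lintegral_ofReal hcint.integrableOn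
      (ae_of_all _ fun z => (z.2 i).2.1 ω')]
  have hfin : ∀ B : Set (Belief Ω), (ENNReal.ofReal (p ω') • (μ ω').map (fun q => q i)) B ≠ ∞ := by
    intro B
    have : IsProbabilityMeasure ((μ ω').map (fun q => q i)) :=
      Measure.isProbabilityMeasure_map (measurable_pi_apply i).aemeasurable
    rw [Measure.smul_apply, smul_eq_mul]
    exact ENNReal.mul_ne_top ENNReal.ofReal_ne_top (measure_ne_top _ _)
  constructor
  · intro h
    ext B hB
    have h1 : ∫ z in (fun z : Ω × (Fin n → Belief Ω) => z.2 i) ⁻¹' B,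
        (z.2 i).1 ω' ∂(jointP p μ) = _ := integral_congr_ae (ae_restrict_of_ae h)
    rw [setIntegral_condExp hle hind ⟨B, hB, rfl⟩, hI B hB] at h1
    rw [← hI2 B hB, h1, ENNReal.ofReal_toReal (hfin B)]
  · intro h
    refine ae_eq_condExp_of_forall_setIntegral_eq hle hind (fun s _ _ => hcint.integrableOn) ?_ ?_
    · rintro s ⟨B, hB, rfl⟩ _
      rw [hI B hB, ← h, ← hI2 B hB, ENNReal.toReal_ofReal]
      exact integral_nonneg fun z => (z.2 i).2.1 ω'
    · have : @Measurable _ _ (MeasurableSpace.comap (fun z : Ω × (Fin n → Belief Ω) => z.2 i)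
          inferInstance) _ (fun z : Ω × (Fin n → Belief Ω) => (z.2 i).1 ω') :=
        (measurable_coord ω').comp (comap_measurable _)
      exact this.stronglyMeasurable.aestronglyMeasurable

/-! ### Part 3: the one-state constraint and feasibility -/

theorem measurable_ratio {Ω : Type} [Fintype Ω] (ω₀ ω : Ω) :
    Measurable (fun x : Belief Ω => ENNReal.ofReal (x.1 ω) / ENNReal.ofReal (x.1 ω₀)) :=
  (measurable_coord ω).ennreal_ofReal.div (measurable_coord ω₀).ennreal_ofReal

theorem constraint_of_feasible {Ω : Type} [Fintype Ω] [MeasurableSpace Ω]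
    [MeasurableSingletonClass Ω] (p : Ω → ℝ) (hp : ∀ ω, 0 < p ω) (n : ℕ) (ω₀ : Ω)
    (μ : Ω → Measure (Fin n → Belief Ω)) (h : Feasible p n μ) (i : Fin n) (ω : Ω) :
    ∫⁻ x : Belief Ω, ENNReal.ofReal (x.1 ω) / ENNReal.ofReal (x.1 ω₀)
      ∂((μ ω₀).map (fun q : Fin n → Belief Ω => q i)) ≤ ENNReal.ofReal (p ω / p ω₀) := by
  have := h.1
  have h0 := (feas_iff p n μ i ω₀).1 (h.2 i ω₀)
  have h1 := (feas_iff p n μ i ω).1 (h.2 i ω)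
  set Q := ∑ ω, ENNReal.ofReal (p ω) • (μ ω).map (fun q => q i) with hQ
  rw [ENNReal.ofReal_div_of_pos (hp ω₀), ENNReal.le_div_iff_mul_le (by simp [hp]) (by simp),
    mul_comm, ← smul_eq_mul, ← lintegral_smul_measure, ← h0,
    lintegral_withDensity_eq_lintegral_mul _ (measurable_coord ω₀).ennreal_ofReal
      (measurable_ratio ω₀ ω)]
  calc _ ≤ ∫⁻ x : Belief Ω, ENNReal.ofReal (x.1 ω) ∂Q :=
        lintegral_mono fun x => ENNReal.mul_div_le
    _ = Q.withDensity (fun x => ENNReal.ofReal (x.1 ω)) Set.univ := by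
        rw [withDensity_apply _ MeasurableSet.univ, Measure.restrict_univ]
    _ = ENNReal.ofReal (p ω) := by
        have : IsProbabilityMeasure ((μ ω).map (fun q => q i)) :=
          Measure.isProbabilityMeasure_map (measurable_pi_apply i).aemeasurable
        rw [h1]; simp
    _ ≤ _ := le_rfl

theorem exists_marginals {Ω : Type} [Fintype Ω] [DecidableEq Ω]
    (p : Ω → ℝ) (hp : ∀ ω, 0 < p ω) (ω₀ : Ω) (ρ : Measure (Belief Ω)) [IsProbabilityMeasure ρ]
    (h : ∀ ω, ω ≠ ω₀ → ∫⁻ x : Belief Ω, ENNReal.ofReal (x.1 ω) / ENNReal.ofReal (x.1 ω₀) ∂ρ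
      ≤ ENNReal.ofReal (p ω / p ω₀)) :
    ∃ L : Ω → Measure (Belief Ω), (∀ ω, IsProbabilityMeasure (L ω)) ∧ L ω₀ = ρ ∧
      ∀ ω', (∑ ω, ENNReal.ofReal (p ω) • L ω).withDensity (fun x => ENNReal.ofReal (x.1 ω')) =
        ENNReal.ofReal (p ω') • L ω' := by
  set r : Ω → Belief Ω → ℝ≥0∞ := fun ω x => ENNReal.ofReal (x.1 ω) / ENNReal.ofReal (x.1 ω₀) with hr
  have hrm : ∀ ω, Measurable (r ω) := measurable_ratio ω₀
  have hpos : ∀ᵐ x ∂ρ, 0 < x.1 ω₀ := by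
    have : ∀ᵐ x ∂ρ, ∀ ω, ω ≠ ω₀ → r ω x < ∞ := by
      refine ae_all_iff.2 fun ω => ?_
      by_cases hω : ω = ω₀
      · simp [hω]
      · filter_upwards [ae_lt_top (hrm ω) ((h ω hω).trans_lt ENNReal.ofReal_lt_top).ne] with x hx _
        exact hx
    filter_upwards [this] with x hx
    refine lt_of_le_of_ne (x.2.1 ω₀) fun h0 => ?_
    have hz : ∀ ω, x.1 ω = 0 := by
      intro ω
      by_cases hω : ω = ω₀
      · rw [hω, ← h0]
      · by_contra hne
        have := hx ω hω
        simp only [hr, ← h0, ENNReal.ofReal_zero] at this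
        rw [ENNReal.div_zero] at this
        · exact absurd this (lt_irrefl _)
        · simpa using lt_of_le_of_ne (x.2.1 ω) (Ne.symm hne)
    have := x.2.2
    simp [hz] at this
  have hr0 : r ω₀ =ᵐ[ρ] 1 := by
    filter_upwards [hpos] with x hx
    exact ENNReal.div_self (by simpa using hx) (by simp)
  have hrint : ∀ ω, ENNReal.ofReal (p ω₀) * ∫⁻ x, r ω x ∂ρ ≤ ENNReal.ofReal (p ω) := by
    intro ω
    by_cases hω : ω = ω₀
    · rw [hω, lintegral_congr_ae hr0]; simp
    · have := h ω hω
      rwa [ENNReal.ofReal_div_of_pos (hp ω₀), ENNReal.le_div_iff_mul_le (by simp [hp]) (by simp),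
        mul_comm] at this
  set c : Ω → ℝ≥0∞ := fun ω => ENNReal.ofReal (p ω) - ENNReal.ofReal (p ω₀) * ∫⁻ x, r ω x ∂ρ with hc
  have hc0 : c ω₀ = 0 := by
    simp only [hc]
    rw [lintegral_congr_ae hr0]; simp
  let e : Ω → Belief Ω := fun ω => ⟨Pi.single ω 1, single_mem_stdSimplex ℝ ω⟩
  set M : Ω → Measure (Belief Ω) := fun ω =>
    ENNReal.ofReal (p ω₀) • ρ.withDensity (r ω) + c ω • Measure.dirac (e ω) with hM
  have hMm : ∀ ω, M ω Set.univ = ENNReal.ofReal (p ω) := by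
    intro ω
    simp only [hM, Measure.add_apply, Measure.smul_apply, smul_eq_mul,
      withDensity_apply _ MeasurableSet.univ, Measure.restrict_univ, hc]
    simp [add_tsub_cancel_of_le (hrint ω)]
  have hM0 : M ω₀ = ENNReal.ofReal (p ω₀) • ρ := by
    simp only [hM, hc0, zero_smul, add_zero]
    rw [withDensity_congr_ae hr0, withDensity_one]
  have hne : ∀ ω, ENNReal.ofReal (p ω) ≠ 0 := fun ω => by simp [hp]
  have hcancel : ∀ ω, ENNReal.ofReal (p ω) • ((ENNReal.ofReal (p ω))⁻¹ • M ω) = M ω := by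
    intro ω
    rw [smul_smul, ENNReal.mul_inv_cancel (hne ω) ENNReal.ofReal_ne_top, one_smul]
  refine ⟨fun ω => (ENNReal.ofReal (p ω))⁻¹ • M ω, fun ω => ⟨?_⟩, ?_, fun ω' => ?_⟩
  · rw [Measure.smul_apply, hMm, smul_eq_mul, ENNReal.inv_mul_cancel (hne ω) ENNReal.ofReal_ne_top]
  · simp only [hM0]
    rw [smul_smul, ENNReal.inv_mul_cancel (hne ω₀) ENNReal.ofReal_ne_top, one_smul]
  · simp only [hcancel]
    have hm' : Measurable (fun x : Belief Ω => ENNReal.ofReal (x.1 ω')) :=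
      (measurable_coord ω').ennreal_ofReal
    ext B hB
    have hmB := hm'.indicator hB
    rw [withDensity_apply _ hB, ← lintegral_indicator hB, lintegral_finsetSum_measure]
    simp only [hM, lintegral_add_measure, lintegral_smul_measure, lintegral_dirac' _ hmB]
    simp only [lintegral_withDensity_eq_lintegral_mul _ (hrm _) hmB]
    rw [Finset.sum_add_distrib]
    simp only [smul_eq_mul]
    rw [← Finset.mul_sum, ← lintegral_finsetSum _ (fun ω _ => (hrm ω).mul hmB),
      Measure.add_apply, Measure.smul_apply, Measure.smul_apply, withDensity_apply _ hB,
      Measure.dirac_apply' _ hB, ← lintegral_indicator hB, smul_eq_mul, smul_eq_mul]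
    congr 1
    · congr 1
      apply lintegral_congr_ae
      filter_upwards [hpos] with x hx
      by_cases hxB : x ∈ B
      · simp only [Pi.mul_apply, Set.indicator_of_mem hxB]
        rw [← Finset.sum_mul]
        have : ∑ ω, r ω x = (ENNReal.ofReal (x.1 ω₀))⁻¹ := by
          simp only [hr, div_eq_mul_inv]
          rw [← Finset.sum_mul, ← ENNReal.ofReal_sum_of_nonneg (fun ω _ => x.2.1 ω), x.2.2]
          simp
        rw [this, mul_comm]
        rfl
      · simp [Set.indicator_of_notMem hxB]
    · rw [Finset.sum_eq_single ω']
      · by_cases hxB : e ω' ∈ B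
        · simp [Set.indicator_of_mem hxB, e]
        · simp [Set.indicator_of_notMem hxB]
      · intro ω _ hω
        by_cases hxB : e ω ∈ B
        · simp [Set.indicator_of_mem hxB, e, hω.symm]
        · simp [Set.indicator_of_notMem hxB]
      · simp

theorem feasible_of_constraint {Ω : Type} [Fintype Ω] [DecidableEq Ω] [MeasurableSpace Ω]
    [MeasurableSingletonClass Ω]
    (p : Ω → ℝ) (hp : ∀ ω, 0 < p ω) (n : ℕ) (ω₀ : Ω)
    (π : Measure (Fin n → Belief Ω)) [IsProbabilityMeasure π]
    (h : ∀ (i : Fin n) (ω : Ω), ω ≠ ω₀ →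
            ∫⁻ x : Belief Ω, ENNReal.ofReal (x.1 ω) / ENNReal.ofReal (x.1 ω₀)
                ∂(π.map (fun q : Fin n → Belief Ω => q i))
              ≤ ENNReal.ofReal (p ω / p ω₀)) :
    ∃ μ : Ω → Measure (Fin n → Belief Ω), Feasible p n μ ∧ μ ω₀ = π := by
  have hpr : ∀ i, IsProbabilityMeasure (π.map (fun q : Fin n → Belief Ω => q i)) :=
    fun i => Measure.isProbabilityMeasure_map (measurable_pi_apply i).aemeasurable
  choose L hL1 hL2 hL3 using fun i => exists_marginals p hp ω₀ _ (h i)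
  let μ : Ω → Measure (Fin n → Belief Ω) := fun ω =>
    if ω = ω₀ then π else Measure.pi (fun i => L i ω)
  have hμ : ∀ ω, IsProbabilityMeasure (μ ω) := by
    intro ω
    by_cases hω : ω = ω₀
    · simp only [μ, hω, if_true]; infer_instance
    · simp only [μ, hω, if_false]; infer_instance
  have hmap : ∀ ω i, (μ ω).map (fun q => q i) = L i ω := by
    intro ω i
    by_cases hω : ω = ω₀
    · simp only [μ, hω, if_true, hL2]
    · simp only [μ, hω, if_false]
      exact (measurePreserving_eval (fun i => L i ω) i).map_eq
  refine ⟨μ, ⟨hμ, fun i ω' => (feas_iff p n μ i ω').2 ?_⟩, by simp [μ]⟩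
  simp only [hmap]
  exact hL3 i ω'

/-- one-state persuasion as a finite-dimensional optimization
(Lemma `lm_one_state_counting_extreme`), with the supremum attained. -/
theorem one_state_value_eq
    {Ω : Type} [Fintype Ω] [DecidableEq Ω] [MeasurableSpace Ω] [MeasurableSingletonClass Ω]
    (hΩ : 2 ≤ Fintype.card Ω)
    (p : Ω → ℝ) (hp : ∀ ω, 0 < p ω) (hpsum : ∑ ω : Ω, p ω = 1)
    (n : ℕ) (hn : 1 ≤ n) (ω₀ : Ω)
    (v : (Fin n → Belief Ω) → ℝ)
    (hvb : ∃ C : ℝ, ∀ x, |v x| ≤ C)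
    (hvusc : UpperSemicontinuous v) :
    ∃ m : ℝ,
      IsGreatest
        { r : ℝ | ∃ π : Measure (Fin n → Belief Ω),
          IsProbabilityMeasure π ∧
          (∀ (i : Fin n) (ω : Ω), ω ≠ ω₀ →
            ∫⁻ x : Belief Ω, ENNReal.ofReal (x.1 ω) / ENNReal.ofReal (x.1 ω₀)
                ∂(π.map (fun q : Fin n → Belief Ω => q i))
              ≤ ENNReal.ofReal (p ω / p ω₀)) ∧
          (∃ s : Finset (Fin n → Belief Ω),
            s.card ≤ n * (Fintype.card Ω - 1) + 1 ∧ π (↑s)ᶜ = 0) ∧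
          r = ∫ x, v x ∂π } m ∧
      Val p n (fun ω => if ω = ω₀ then v else fun _ => 0) = p ω₀ * m := by
  classical
  obtain ⟨C, hC⟩ := hvb
  have hvC : ∀ x, 0 ≤ C - v x := fun x => by linarith [(abs_le.1 (hC x)).2]
  have hvm : Measurable v := hvusc.measurable
  have hvint : ∀ (π : Measure (Fin n → Belief Ω)) [IsProbabilityMeasure π], Integrable v π :=
    fun π _ => Integrable.of_bound hvm.aestronglyMeasurable C (ae_of_all _ hC)
  let J := Fin n × {ω : Ω // ω ≠ ω₀}
  have hJ : Fintype.card J = n * (Fintype.card Ω - 1) := by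
    simp [J, Fintype.card_subtype_compl]
  let f : Option J → (Fin n → Belief Ω) → ℝ≥0∞ := fun o => match o with
    | none => fun q => ENNReal.ofReal (C - v q)
    | some j => fun q => ENNReal.ofReal ((q j.1).1 j.2.1) / ENNReal.ofReal ((q j.1).1 ω₀)
  let cc : ℝ → Option J → ℝ := fun r o => match o with
    | none => C - r
    | some j => p j.2.1 / p ω₀
  have hcoord : ∀ (i : Fin n) (ω : Ω),
      Continuous (fun q : Fin n → Belief Ω => ENNReal.ofReal ((q i).1 ω)) := fun i ω =>
    ENNReal.continuous_ofReal.comp ((continuous_apply ω).comp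
      (continuous_subtype_val.comp (continuous_apply i)))
  have hf : ∀ j, LowerSemicontinuous (f j) := by
    rintro (_ | j)
    · intro x y hy
      have hy' : y < ENNReal.ofReal (C - v x) := hy
      have hyt : y ≠ ∞ := (hy'.trans ENNReal.ofReal_lt_top).ne
      have h1 : y.toReal < C - v x := (ENNReal.lt_ofReal_iff_toReal_lt hyt).1 hy'
      filter_upwards [hvusc x (C - y.toReal) (by linarith)] with z hz
      exact (ENNReal.lt_ofReal_iff_toReal_lt hyt).2 (by linarith)
    · exact lsc_ennreal_mul (hcoord _ _).lowerSemicontinuous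
        ((hcoord j.1 ω₀).inv).lowerSemicontinuous
  have hfm : ∀ j, Measurable (f j) := by
    rintro (_ | j)
    · exact (measurable_const.sub hvm).ennreal_ofReal
    · exact (measurable_ratio ω₀ j.2.1).comp (measurable_pi_apply j.1)
  have hlin : ∀ (π : Measure (Fin n → Belief Ω)) [IsProbabilityMeasure π],
      ∫⁻ x, f none x ∂π = ENNReal.ofReal (C - ∫ x, v x ∂π) := by
    intro π _
    have : C - ∫ x, v x ∂π = ∫ x, (C - v x) ∂π := by
      rw [integral_sub (integrable_const _) (hvint π)]; simp
    rw [this]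
    exact (ofReal_integral_eq_lintegral_ofReal ((integrable_const _).sub (hvint π))
      (ae_of_all _ hvC)).symm
  have hle : ∀ (π : Measure (Fin n → Belief Ω)) [IsProbabilityMeasure π], ∫ x, v x ∂π ≤ C := by
    intro π _
    have := integral_mono (hvint π) (integrable_const C) (fun x => by linarith [hvC x])
    simpa using this
  have hmapc : ∀ (π : Measure (Fin n → Belief Ω)) (j : J),
      ∫⁻ x : Belief Ω, ENNReal.ofReal (x.1 j.2.1) / ENNReal.ofReal (x.1 ω₀)
        ∂(π.map (fun q : Fin n → Belief Ω => q j.1)) = ∫⁻ x, f (some j) x ∂π := fun π j =>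
    lintegral_map (measurable_ratio ω₀ j.2.1) (measurable_pi_apply j.1)
  set G : Set ℝ := {r | Ach f (Fintype.card J + 1) (cc r)} with hG
  have hmem : ∀ (π : Measure (Fin n → Belief Ω)) [IsProbabilityMeasure π],
      (∀ (i : Fin n) (ω : Ω), ω ≠ ω₀ →
            ∫⁻ x : Belief Ω, ENNReal.ofReal (x.1 ω) / ENNReal.ofReal (x.1 ω₀)
                ∂(π.map (fun q : Fin n → Belief Ω => q i))
              ≤ ENNReal.ofReal (p ω / p ω₀)) → ∫ x, v x ∂π ∈ G := by
    intro π _ h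
    refine ach_integral f hf hfm (cc _) ?_ π ?_
    · rintro (_ | j)
      · exact sub_nonneg.2 (hle π)
      · exact (div_pos (hp _) (hp _)).le
    · rintro (_ | j)
      · exact (hlin π).le
      · rw [← hmapc]
        exact h j.1 j.2.1 j.2.2
  have hGcl : IsClosed G := by
    have hcont : Continuous cc := by
      refine continuous_pi ?_
      rintro (_ | j)
      · exact continuous_const.sub continuous_id
      · exact continuous_const
    exact (ach_closed f hf _).preimage hcont
  have hGb : BddAbove G := by
    refine ⟨C, ?_⟩
    rintro r ⟨_, _, h, _⟩
    exact sub_nonneg.1 (h none)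
  have hGne : G.Nonempty := by
    let b : Belief Ω := ⟨p, fun ω => (hp ω).le, hpsum⟩
    refine ⟨v (fun _ => b), ach_point _ (fun _ => b) ?_ ?_⟩
    · rintro (_ | j)
      · exact hvC _
      · exact (div_pos (hp _) (hp _)).le
    · rintro (_ | j)
      · exact le_rfl
      · exact (ENNReal.ofReal_div_of_pos (hp ω₀)).ge
  have hmG : sSup G ∈ G := hGcl.csSup_mem hGne hGb
  set m := sSup G with hm
  obtain ⟨l, q, hc0, hlq⟩ := hmG
  let π₀ : Measure (Fin n → Belief Ω) := ∑ k, ENNReal.ofReal (l.1 k) • Measure.dirac (q k)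
  have hπ₀ : IsProbabilityMeasure π₀ := by
    constructor
    simp only [π₀, Measure.coe_finsetSum, Finset.sum_apply, Measure.smul_apply, measure_univ,
      smul_eq_mul, mul_one]
    rw [← ENNReal.ofReal_sum_of_nonneg (fun k _ => l.2.1 k), l.2.2, ENNReal.ofReal_one]
  have hπf : ∀ j, ∫⁻ x, f j x ∂π₀ ≤ ENNReal.ofReal (cc m j) := by
    intro j
    refine le_trans (le_of_eq ?_) (hlq j)
    simp only [π₀]
    rw [lintegral_finsetSum_measure]
    refine Finset.sum_congr rfl fun k _ => ?_
    rw [lintegral_smul_measure, lintegral_dirac' _ (hfm j), smul_eq_mul]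
  have hπc : ∀ (i : Fin n) (ω : Ω), ω ≠ ω₀ →
            ∫⁻ x : Belief Ω, ENNReal.ofReal (x.1 ω) / ENNReal.ofReal (x.1 ω₀)
                ∂(π₀.map (fun q : Fin n → Belief Ω => q i))
              ≤ ENNReal.ofReal (p ω / p ω₀) := by
    intro i ω hω
    exact (hmapc π₀ (i, ⟨ω, hω⟩)).le.trans (hπf (some (i, ⟨ω, hω⟩)))
  have hπv : ∫ x, v x ∂π₀ = m := by
    apply le_antisymm
    · exact le_csSup hGb (hmem π₀ hπc)
    · have h1 := hπf none
      rw [hlin π₀] at h1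
      have h2 : C - ∫ x, v x ∂π₀ ≤ C - m := (ENNReal.ofReal_le_ofReal_iff (hc0 none)).1 h1
      linarith
  refine ⟨m, ⟨⟨π₀, hπ₀, hπc, ⟨Finset.univ.image q, ?_, ?_⟩, hπv.symm⟩, ?_⟩, ?_⟩
  · refine Finset.card_image_le.trans ?_
    rw [Finset.card_univ, Fintype.card_fin, hJ]
  · simp only [π₀, Measure.coe_finsetSum, Finset.sum_apply, Measure.smul_apply, smul_eq_mul]
    refine Finset.sum_eq_zero fun k _ => ?_
    rw [Measure.dirac_apply' _ (Finset.measurableSet _).compl]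
    simp
  · rintro r ⟨π, hπ, hcon, _, rfl⟩
    exact le_csSup hGb (hmem π hcon)
  · have hsum : ∀ μ : Ω → Measure (Fin n → Belief Ω),
        ∑ ω : Ω, p ω * ∫ x, (if ω = ω₀ then v else fun _ => 0) x ∂(μ ω) =
          p ω₀ * ∫ x, v x ∂(μ ω₀) := by
      intro μ
      rw [Finset.sum_eq_single ω₀]
      · simp
      · intro ω _ hω; simp [hω]
      · simp
    apply IsGreatest.csSup_eq
    constructor
    · obtain ⟨μ, hμ, hμ0⟩ := feasible_of_constraint p hp n ω₀ π₀ hπc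
      exact ⟨μ, hμ, by rw [hsum, hμ0, hπv]⟩
    · rintro r ⟨μ, hμ, rfl⟩
      rw [hsum]
      have := hμ.1 ω₀
      exact mul_le_mul_of_nonneg_left (le_csSup hGb (hmem (μ ω₀) fun i ω _ =>
        constraint_of_feasible p hp n ω₀ μ hμ i ω)) (hp ω₀).le
end
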